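/- arXiv:1907.01647 — 10 statements merged into one kernel-verified Lean document; each statement's English description precedes it below -/
import Mathlib

section
/- For every real number x and every nonzero real number ξ, the logistic function satisfies σ(x) ≥ σ(ξ) · exp((x − ξ)/2 − λ(ξ)(x² − ξ²)), where λ(ξ) = (σ(ξ) − 1/2)/(2ξ). -/
/-!
With `u = x / 2` and `t = ξ / 2` one has `σ(x) = exp u / (2 cosh u)` and
`λ(ξ) = tanh t / (8 t)`, so the bound becomes
`log (cosh u) ≤ log (cosh t) + tanh t / (2 t) * (u ^ 2 - t ^ 2)`.
Both sides are even in `u` and in `t`, so `u ≥ 0` and `t > 0` may be assumed. The derivative in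
`u` of `log (cosh u) - tanh t / (2 t) * u ^ 2` is `u * (tanh u / u - tanh t / t)`, and `tanh u / u`
decreases for `u > 0`; hence that function is largest at `u = t`. The monotonicity of `tanh u / u`
is, by product-to-sum formulas, that of `sinh y / y`, which follows from convexity of `sinh` on
`[0, ∞)`.
-/

open Real Set in
/-- `sinh y / y` increases on `(0, ∞)`, in multiplied-out form. -/
lemma mul_sinh_le_mul_sinh {a b : ℝ} (ha : 0 ≤ a) (hab : a ≤ b) (hb : 0 < b) :
    b * sinh a ≤ a * sinh b := by
  have hc : ConvexOn ℝ (Ici (0 : ℝ)) sinh := by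
    refine MonotoneOn.convexOn_of_deriv (convex_Ici 0) continuous_sinh.continuousOn
      differentiable_sinh.differentiableOn ?_
    rw [Real.deriv_sinh]
    exact cosh_strictMonoOn.monotoneOn.mono interior_subset
  have h1 : 0 ≤ 1 - a / b := sub_nonneg.2 ((div_le_one hb).2 hab)
  have h2 : 0 ≤ a / b := by positivity
  have h := hc.2 (mem_Ici.2 le_rfl) (mem_Ici.2 hb.le) h1 h2 (by ring)
  simp only [smul_eq_mul, mul_zero, zero_add, sinh_zero, div_mul_cancel₀ a hb.ne'] at h
  calc b * sinh a ≤ b * (a / b * sinh b) := by gcongr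
    _ = a * sinh b := by field_simp

open Real in
/-- `tanh u / u` decreases on `(0, ∞)`, in multiplied-out form. -/
lemma mul_tanh_le_mul_tanh {s u : ℝ} (hs : 0 < s) (hsu : s ≤ u) :
    s * tanh u ≤ u * tanh s := by
  have h := mul_sinh_le_mul_sinh (a := u - s) (b := u + s) (by linarith) (by linarith)
    (by linarith)
  rw [sinh_sub, sinh_add] at h
  rw [tanh_eq_sinh_div_cosh, tanh_eq_sinh_div_cosh, mul_div_assoc', mul_div_assoc',
    div_le_div_iff₀ (cosh_pos u) (cosh_pos s)]
  linarith

open Real Set in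
lemma log_cosh_le_of_pos {t u : ℝ} (ht : 0 < t) (hu : 0 ≤ u) :
    log (cosh u) ≤ log (cosh t) + tanh t / (2 * t) * (u ^ 2 - t ^ 2) := by
  set f : ℝ → ℝ := fun v => log (cosh v) - tanh t / (2 * t) * v ^ 2 with hf
  have hd : ∀ v, HasDerivAt f (tanh v - v * tanh t / t) v := by
    intro v
    have h := ((hasDerivAt_cosh v).log (cosh_pos v).ne').sub
      ((hasDerivAt_pow 2 v).const_mul (tanh t / (2 * t)))
    refine h.congr_deriv ?_
    rw [tanh_eq_sinh_div_cosh v]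
    field_simp
    push_cast
    ring
  have hcont : Continuous f := continuous_iff_continuousAt.2 fun v => (hd v).continuousAt
  have hdiff : Differentiable ℝ f := fun v => (hd v).differentiableAt
  have key : f u ≤ f t := by
    rcases le_total u t with hut | htu
    · refine monotoneOn_of_deriv_nonneg (convex_Icc 0 t) hcont.continuousOn
        hdiff.differentiableOn (fun v hv => ?_) ⟨hu, hut⟩ ⟨ht.le, le_rfl⟩ hut
      rw [interior_Icc] at hv
      rw [(hd v).deriv, sub_nonneg, div_le_iff₀ ht]
      linarith [mul_tanh_le_mul_tanh hv.1 hv.2.le]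
    · refine antitoneOn_of_deriv_nonpos (convex_Ici t) hcont.continuousOn
        hdiff.differentiableOn (fun v hv => ?_) (mem_Ici.2 le_rfl) (mem_Ici.2 htu) htu
      rw [interior_Ici] at hv
      rw [(hd v).deriv, sub_nonpos, le_div_iff₀ ht]
      linarith [mul_tanh_le_mul_tanh ht (le_of_lt hv)]
  simp only [hf] at key
  linarith

open Real in
/-- The bound on `log ∘ cosh` for all signs, by evenness in `u` and in `t`. -/
lemma log_cosh_le {t : ℝ} (u : ℝ) (ht : t ≠ 0) :
    log (cosh u) ≤ log (cosh t) + tanh t / (2 * t) * (u ^ 2 - t ^ 2) := by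
  have h := log_cosh_le_of_pos (abs_pos.2 ht) (abs_nonneg u)
  rw [cosh_abs, cosh_abs, sq_abs, sq_abs] at h
  rcases abs_choice t with e | e <;> rw [e] at h
  · exact h
  · rwa [tanh_neg, mul_neg, neg_div_neg_eq] at h

open Real in
lemma logistic_eq_exp_div_cosh (x : ℝ) :
    1 / (1 + exp (-x)) = exp (x / 2) / (2 * cosh (x / 2)) := by
  have h : exp (x / 2) * exp (-x) = exp (-(x / 2)) := by rw [← exp_add]; ring_nf
  rw [cosh_eq, div_eq_div_iff (by positivity) (by positivity), mul_add, h]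
  ring

open Real in
lemma logistic_sub_half (x : ℝ) :
    1 / (1 + exp (-x)) - 1 / 2 = tanh (x / 2) / 2 := by
  have hc := (cosh_pos (x / 2)).ne'
  rw [logistic_eq_exp_div_cosh, tanh_eq_sinh_div_cosh, ← cosh_add_sinh]
  field_simp
  ring

/-- Jaakkola–Jordan variational lower bound on the logistic function
`σ(x) = 1/(1 + exp(-x))`: for all real `x` and nonzero `ξ`,
`σ(x) ≥ σ(ξ) · exp((x − ξ)/2 − λ(ξ)(x² − ξ²))` where
`λ(ξ) = (σ(ξ) − 1/2)/(2ξ)`. -/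
theorem stmt_0 (x ξ : ℝ) (hξ : ξ ≠ 0) :
    1 / (1 + Real.exp (-x)) ≥
      (1 / (1 + Real.exp (-ξ))) *
        Real.exp ((x - ξ) / 2 -
          ((1 / (1 + Real.exp (-ξ)) - 1 / 2) / (2 * ξ)) * (x ^ 2 - ξ ^ 2)) := by
  have hlog := log_cosh_le (x / 2) (div_ne_zero hξ two_ne_zero)
  rw [logistic_sub_half, logistic_eq_exp_div_cosh, logistic_eq_exp_div_cosh]
  set L := Real.tanh (ξ / 2) / 2 / (2 * ξ) * (x ^ 2 - ξ ^ 2) with hL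
  have hL' : Real.tanh (ξ / 2) / (2 * (ξ / 2)) * ((x / 2) ^ 2 - (ξ / 2) ^ 2) = L := by
    rw [hL]
    field_simp
  rw [hL'] at hlog
  have hx := Real.cosh_pos (x / 2)
  have ht := Real.cosh_pos (ξ / 2)
  have hcosh : Real.cosh (x / 2) ≤ Real.cosh (ξ / 2) * Real.exp L := by
    have h := Real.exp_le_exp.2 hlog
    rwa [Real.exp_add, Real.exp_log hx, Real.exp_log ht] at h
  have hexp : Real.exp (ξ / 2) * Real.exp ((x - ξ) / 2 - L) = Real.exp (x / 2) / Real.exp L := by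
    rw [← Real.exp_add, ← Real.exp_sub]
    ring_nf
  rw [ge_iff_le, div_mul_eq_mul_div, hexp, div_div]
  exact div_le_div_of_nonneg_left (Real.exp_pos _).le (by positivity) (by linarith)
end

section
/- Let α > 0, let θ, θ★ ∈ ℝ^d with ‖θ‖₂ ≤ 1 and ‖θ★‖₂ ≤ 1, let x₁, …, x_s ∈ ℝ^d with ‖xᵢ‖₂ ≤ 1 for every i, let X be the s × d matrix with rows x₁, …, x_s, and define f(θ) = det(X Xᵀ) · ∏_{i=1}^s σ(⟨θ, xᵢ⟩) · exp(2α⟨θ, xᵢ⟩). Then |f(θ) − f(θ★)| ≤ ((8α + 1)/4) · e^{2αs} · ∑_{i=1}^s |⟨θ − θ★, xᵢ⟩| ≤ ((8α + 1)/4) · s · e^{2αs} · √d · ‖θ − θ★‖_∞. -/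
/-!
Each factor `h(u) = σ(u) exp(2αu)` satisfies `0 ≤ h ≤ exp(2α)` on `[-1, 1]`, and
`h' = exp(2αu) (2ασ + σ(1 - σ)) ≤ exp(2α) (2α + 1/4)` there because `σ(1 - σ) ≤ 1/4`, so `h` is
Lipschitz on `[-1, 1]` by the mean value inequality (`factor_lipschitz`). By Cauchy–Schwarz all the
inner products lie in `[-1, 1]`, and a telescoping argument (`abs_prod_sub_prod_le`) bounds the
difference of the two products. The determinant lies in `[0, 1]` (`gram_det_mem`): `X Xᵀ` is
positive semidefinite with trace at most `s`, and its eigenvalues satisfy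
`∏ λᵢ ≤ ∏ exp(λᵢ - 1) = exp(tr - s) ≤ 1`. The last inequality is Cauchy–Schwarz followed by the
comparison of the Euclidean norm with the sup norm.
-/

open RealInnerProductSpace

/-- Telescoping bound for a difference of products whose factors are at most `M` in absolute value
and differ by at most `M * c i`. -/
lemma abs_prod_sub_prod_le {ι : Type*} (S : Finset ι) (a b c : ι → ℝ) (M : ℝ)
    (ha : ∀ i, |a i| ≤ M) (hb : ∀ i, |b i| ≤ M) (hc : ∀ i, |a i - b i| ≤ M * c i) :
    |∏ i ∈ S, a i - ∏ i ∈ S, b i| ≤ M ^ S.card * ∑ i ∈ S, c i := by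
  classical
  induction S using Finset.induction_on with
  | empty => simp
  | insert j S hj ih =>
    rw [Finset.prod_insert hj, Finset.prod_insert hj, Finset.sum_insert hj,
      Finset.card_insert_of_notMem hj]
    have hM : 0 ≤ M := (abs_nonneg _).trans (ha j)
    have hB : |∏ i ∈ S, b i| ≤ M ^ S.card := by
      rw [Finset.abs_prod]
      exact (Finset.prod_le_prod (fun i _ => abs_nonneg _) fun i _ => hb i).trans_eq (by simp)
    calc |a j * ∏ i ∈ S, a i - b j * ∏ i ∈ S, b i|
        = |a j * (∏ i ∈ S, a i - ∏ i ∈ S, b i) + (a j - b j) * ∏ i ∈ S, b i| := by ring_nf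
      _ ≤ |a j| * |∏ i ∈ S, a i - ∏ i ∈ S, b i| + |a j - b j| * |∏ i ∈ S, b i| := by
          rw [← abs_mul, ← abs_mul]; exact abs_add_le _ _
      _ ≤ M * (M ^ S.card * ∑ i ∈ S, c i) + (M * c j) * M ^ S.card := by
          have h1 := mul_le_mul (ha j) ih (abs_nonneg _) hM
          have h2 := mul_le_mul (hc j) hB (abs_nonneg _) ((abs_nonneg _).trans (hc j))
          exact add_le_add h1 h2
      _ = M ^ (S.card + 1) * (c j + ∑ i ∈ S, c i) := by ring

lemma factor_abs_le (α u : ℝ) (hα : 0 < α) (hu : u ≤ 1) :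
    |1 / (1 + Real.exp (-u)) * Real.exp (2 * α * u)| ≤ Real.exp (2 * α) := by
  have hp := Real.exp_pos (-u)
  rw [abs_of_nonneg (by positivity)]
  have h1 : 1 / (1 + Real.exp (-u)) ≤ 1 := by
    rw [div_le_one (by positivity)]; linarith
  have h2 : Real.exp (2 * α * u) ≤ Real.exp (2 * α) := Real.exp_le_exp.2 (by nlinarith)
  calc _ ≤ 1 * Real.exp (2 * α) := by gcongr
    _ = _ := one_mul _

lemma factor_lipschitz (α u v : ℝ) (hα : 0 < α) (hu : u ∈ Set.Icc (-1 : ℝ) 1)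
    (hv : v ∈ Set.Icc (-1 : ℝ) 1) :
    |1 / (1 + Real.exp (-u)) * Real.exp (2 * α * u)
      - 1 / (1 + Real.exp (-v)) * Real.exp (2 * α * v)|
      ≤ Real.exp (2 * α) * ((8 * α + 1) / 4 * |u - v|) := by
  have key : ∀ w : ℝ, HasDerivAt
      (fun w => 1 / (1 + Real.exp (-w)) * Real.exp (2 * α * w))
      (Real.exp (2 * α * w) * (Real.exp (-w) / (1 + Real.exp (-w)) ^ 2
        + 2 * α * (1 / (1 + Real.exp (-w))))) w := by
    intro w
    have hp := Real.exp_pos (-w)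
    have h1 : HasDerivAt (fun w : ℝ => 1 + Real.exp (-w)) (-Real.exp (-w)) w := by
      simpa using ((hasDerivAt_neg w).exp).const_add 1
    have h2 : HasDerivAt (fun w : ℝ => Real.exp (2 * α * w))
        (Real.exp (2 * α * w) * (2 * α)) w := by
      simpa using ((hasDerivAt_id w).const_mul (2 * α)).exp
    have h3 := ((hasDerivAt_const w (1 : ℝ)).div h1 (by positivity)).mul h2
    refine HasDerivAt.congr_deriv h3 ?_
    simp only [Pi.div_apply]
    ring
  have := Convex.norm_image_sub_le_of_norm_hasDerivWithin_le
    (C := Real.exp (2 * α) * ((8 * α + 1) / 4))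
    (fun w _ => (key w).hasDerivWithinAt) (s := Set.Icc (-1 : ℝ) 1) ?_ (convex_Icc _ _) hv hu
  · simpa [mul_assoc] using this
  · intro w hw
    have hp := Real.exp_pos (-w)
    rw [Real.norm_of_nonneg (by positivity)]
    have h1 : 1 / (1 + Real.exp (-w)) ≤ 1 := by
      rw [div_le_one (by positivity)]; linarith
    have h2 : Real.exp (2 * α * w) ≤ Real.exp (2 * α) :=
      Real.exp_le_exp.2 (by nlinarith [hw.2])
    -- `σ(1 - σ) ≤ 1/4`, i.e. `4 e ≤ (1 + e)²` with `e = exp(-w)`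
    have h3 : Real.exp (-w) / (1 + Real.exp (-w)) ^ 2 ≤ 1 / 4 := by
      rw [div_le_div_iff₀ (by positivity) (by norm_num)]
      nlinarith [sq_nonneg (1 - Real.exp (-w))]
    apply mul_le_mul h2 _ (by positivity) (by positivity)
    nlinarith

/-- A Gram matrix of `s` vectors in the Euclidean unit ball has determinant in `[0, 1]`. -/
lemma gram_det_mem {d s : ℕ} (X : Matrix (Fin s) (Fin d) ℝ)
    (hX : ∀ i, ∑ j, X i j ^ 2 ≤ 1) :
    0 ≤ (X * X.transpose).det ∧ (X * X.transpose).det ≤ 1 := by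
  have hpsd : (X * X.transpose).PosSemidef := by
    simpa using Matrix.posSemidef_self_mul_conjTranspose X
  refine ⟨hpsd.det_nonneg, ?_⟩
  have htr : ∑ i, hpsd.isHermitian.eigenvalues i ≤ s := by
    have h := hpsd.isHermitian.trace_eq_sum_eigenvalues
    simp only [RCLike.ofReal_real_eq_id, id] at h
    rw [← h, Matrix.trace]
    calc _ ≤ ∑ _i : Fin s, (1 : ℝ) := Finset.sum_le_sum fun i _ => by
            simpa [Matrix.mul_apply, pow_two] using hX i
      _ = s := by simp
  have hdet := hpsd.isHermitian.det_eq_prod_eigenvalues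
  simp only [RCLike.ofReal_real_eq_id, id] at hdet
  rw [hdet]
  calc ∏ i, hpsd.isHermitian.eigenvalues i
      ≤ ∏ i, Real.exp (hpsd.isHermitian.eigenvalues i - 1) :=
        Finset.prod_le_prod (fun i _ => hpsd.eigenvalues_nonneg i) fun i _ => by
          linarith [Real.add_one_le_exp (hpsd.isHermitian.eigenvalues i - 1)]
    _ = Real.exp (∑ i, hpsd.isHermitian.eigenvalues i - s) := by
        rw [← Real.exp_sum]; simp
    _ ≤ 1 := Real.exp_le_one_iff.2 (by linarith)

lemma euclidean_norm_le_sqrt_mul_sup {d : ℕ} (v : EuclideanSpace ℝ (Fin d)) :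
    ‖v‖ ≤ Real.sqrt d * ‖(WithLp.equiv 2 (Fin d → ℝ)) v‖ := by
  rw [EuclideanSpace.norm_eq]
  apply Real.sqrt_le_iff.2
  refine ⟨by positivity, ?_⟩
  rw [mul_pow, Real.sq_sqrt (Nat.cast_nonneg d)]
  calc _ ≤ ∑ _i : Fin d, ‖(WithLp.equiv 2 (Fin d → ℝ)) v‖ ^ 2 :=
        Finset.sum_le_sum fun i _ => by
          gcongr
          exact norm_le_pi_norm ((WithLp.equiv 2 (Fin d → ℝ)) v) i
    _ = _ := by simp

/-- Lipschitz bound on the reward function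
`f(θ) = det(X Xᵀ) ∏ᵢ σ(⟨θ,xᵢ⟩) exp(2α⟨θ,xᵢ⟩)` of a super arm with feature
rows `x₁,…,x_s` (all of Euclidean norm at most 1, as are `θ, θ★`):
`|f(θ) − f(θ★)| ≤ ((8α+1)/4) e^{2αs} ∑ᵢ |⟨θ−θ★, xᵢ⟩|
               ≤ ((8α+1)/4) s e^{2αs} √d ‖θ−θ★‖_∞`. -/
theorem stmt_5 (d s : ℕ) (α : ℝ) (hα : 0 < α)
    (θ θs : EuclideanSpace ℝ (Fin d)) (hθ : ‖θ‖ ≤ 1) (hθs : ‖θs‖ ≤ 1)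
    (x : Fin s → EuclideanSpace ℝ (Fin d)) (hx : ∀ i, ‖x i‖ ≤ 1)
    (X : Matrix (Fin s) (Fin d) ℝ) (hX : ∀ i j, X i j = x i j)
    (f : EuclideanSpace ℝ (Fin d) → ℝ)
    (hf : ∀ t, f t = (X * X.transpose).det *
      ∏ i, (1 / (1 + Real.exp (-⟪t, x i⟫)) * Real.exp (2 * α * ⟪t, x i⟫))) :
    |f θ - f θs| ≤ (8 * α + 1) / 4 * Real.exp (2 * α * s) * ∑ i, |⟪θ - θs, x i⟫| ∧
    (8 * α + 1) / 4 * Real.exp (2 * α * s) * ∑ i, |⟪θ - θs, x i⟫| ≤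
      (8 * α + 1) / 4 * s * Real.exp (2 * α * s) * Real.sqrt d *
        ‖(WithLp.equiv 2 (Fin d → ℝ)) (θ - θs)‖ := by
  have hmem : ∀ t : EuclideanSpace ℝ (Fin d), ‖t‖ ≤ 1 → ∀ i,
      (⟪t, x i⟫ : ℝ) ∈ Set.Icc (-1 : ℝ) 1 := fun t ht i =>
    abs_le.1 ((abs_real_inner_le_norm t (x i)).trans
      (mul_le_one₀ ht (norm_nonneg _) (hx i)))
  constructor
  · obtain ⟨h0, h1⟩ := gram_det_mem X fun i => by
      have h := EuclideanSpace.real_norm_sq_eq (x i)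
      simp only [hX]
      rw [← h]
      exact pow_le_one₀ (norm_nonneg _) (hx i)
    have hprod := abs_prod_sub_prod_le Finset.univ
      (fun i => 1 / (1 + Real.exp (-⟪θ, x i⟫)) * Real.exp (2 * α * ⟪θ, x i⟫))
      (fun i => 1 / (1 + Real.exp (-⟪θs, x i⟫)) * Real.exp (2 * α * ⟪θs, x i⟫))
      (fun i => (8 * α + 1) / 4 * |⟪θ - θs, x i⟫|) (Real.exp (2 * α))
      (fun i => factor_abs_le α _ hα (hmem θ hθ i).2)
      (fun i => factor_abs_le α _ hα (hmem θs hθs i).2)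
      (fun i => by
        rw [inner_sub_left]
        exact factor_lipschitz α _ _ hα (hmem θ hθ i) (hmem θs hθs i))
    rw [hf, hf, ← mul_sub, abs_mul, abs_of_nonneg h0]
    refine (mul_le_of_le_one_left (abs_nonneg _) h1).trans (hprod.trans_eq ?_)
    rw [← Finset.mul_sum, Finset.card_univ, Fintype.card_fin, ← Real.exp_nat_mul,
      mul_comm (s : ℝ)]
    ring
  · have hsum : ∑ i, |⟪θ - θs, x i⟫| ≤
        s * (Real.sqrt d * ‖(WithLp.equiv 2 (Fin d → ℝ)) (θ - θs)‖) := by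
      calc _ ≤ ∑ _i : Fin s, Real.sqrt d * ‖(WithLp.equiv 2 (Fin d → ℝ)) (θ - θs)‖ :=
            Finset.sum_le_sum fun i _ =>
              (abs_real_inner_le_norm _ _).trans
                ((mul_le_of_le_one_right (norm_nonneg _) (hx i)).trans
                  (euclidean_norm_le_sqrt_mul_sup _))
        _ = _ := by simp
    calc _ ≤ (8 * α + 1) / 4 * Real.exp (2 * α * s) *
          (s * (Real.sqrt d * ‖(WithLp.equiv 2 (Fin d → ℝ)) (θ - θs)‖)) := by gcongr
      _ = _ := by ring
end

section
/- Let Φ be a d × d real positive semidefinite matrix, let φ ∈ ℝ^d, let h > 0, S > 0, ε' > 0, set λ = (ε'/(2Sh))² and V = Φ + λI. If there exists ρ ∈ ℝ^d with h² ρᵀ Φ ρ ≤ (ε')², ‖ρ‖₂ ≤ 2S, and |h ρᵀ φ| ≥ ε', then φᵀ V^{−1} φ ≥ 1/2. -/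
open Matrix

/-!
With `w = V⁻¹φ`, nonnegativity of the quadratic form of `V` at `s • ρ - w` gives
`0 ≤ s² ρᵀVρ - 2s ρᵀφ + φᵀV⁻¹φ` for every real `s`: the quadratic-polynomial form of the
generalized Cauchy–Schwarz inequality. The choice of `lam` yields `h² ρᵀVρ ≤ 2ε'²`, so
`s = h² ρᵀφ / (2ε'²)` gives `φᵀV⁻¹φ ≥ (h ρᵀφ)² / (2ε'²) ≥ 1/2`.
-/

/-- Step 1 of the eluder dimension bound: with `λ = (ε'/(2Sh))²` and
`V = Φ + λI` for `Φ` positive semidefinite, if some `ρ` satisfies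
`h²ρᵀΦρ ≤ (ε')²`, `‖ρ‖₂ ≤ 2S` and `|hρᵀφ| ≥ ε'`, then `φᵀV⁻¹φ ≥ 1/2`. -/
theorem stmt_9 (d : ℕ) (Φ : Matrix (Fin d) (Fin d) ℝ) (hΦ : Φ.PosSemidef)
    (φ : Fin d → ℝ) (h S ε' : ℝ) (hh : 0 < h) (hS : 0 < S) (hε' : 0 < ε')
    (lam : ℝ) (hlam : lam = (ε' / (2 * S * h)) ^ 2)
    (V : Matrix (Fin d) (Fin d) ℝ) (hV : V = Φ + lam • (1 : Matrix (Fin d) (Fin d) ℝ))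
    (ρ : Fin d → ℝ)
    (h1 : h ^ 2 * (ρ ⬝ᵥ Φ.mulVec ρ) ≤ ε' ^ 2)
    (h2 : Real.sqrt (∑ i, ρ i ^ 2) ≤ 2 * S)
    (h3 : ε' ≤ |h * (ρ ⬝ᵥ φ)|) :
    1 / 2 ≤ φ ⬝ᵥ V⁻¹.mulVec φ := by
  have hlam0 : 0 < lam := by rw [hlam]; positivity
  have hVpd : V.PosDef := by
    rw [hV]
    exact PosDef.posSemidef_add hΦ (PosDef.one.smul hlam0)
  have hdet : IsUnit V.det := hVpd.det_pos.ne'.isUnit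
  set w := V⁻¹.mulVec φ with hw
  have hVw : V.mulVec w = φ := by
    rw [hw, mulVec_mulVec, mul_nonsing_inv _ hdet, one_mulVec]
  have hVT : Vᵀ = V := by simpa using hVpd.isHermitian.eq
  have hsymm : w ⬝ᵥ V.mulVec ρ = ρ ⬝ᵥ φ := by
    rw [dotProduct_mulVec, ← mulVec_transpose, hVT, hVw, dotProduct_comm]
  have hquad (s : ℝ) :
      0 ≤ s ^ 2 * (ρ ⬝ᵥ V.mulVec ρ) - 2 * s * (ρ ⬝ᵥ φ) + φ ⬝ᵥ w := by
    have hnn := hVpd.posSemidef.dotProduct_mulVec_nonneg (s • ρ - w)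
    simp only [star_trivial, mulVec_sub, mulVec_smul, hVw, sub_dotProduct, dotProduct_sub,
      smul_dotProduct, dotProduct_smul, smul_eq_mul, hsymm, dotProduct_comm w φ] at hnn
    linarith
  have hρ : ρ ⬝ᵥ ρ ≤ (2 * S) ^ 2 := by
    have := (Real.sqrt_le_left (by positivity)).1 h2
    simpa [dotProduct, sq] using this
  have hp : h ^ 2 * (ρ ⬝ᵥ V.mulVec ρ) ≤ 2 * ε' ^ 2 := by
    have hreg : h ^ 2 * lam * (ρ ⬝ᵥ ρ) ≤ ε' ^ 2 := by
      calc h ^ 2 * lam * (ρ ⬝ᵥ ρ) ≤ h ^ 2 * lam * (2 * S) ^ 2 := by gcongr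
        _ = ε' ^ 2 := by rw [hlam]; field_simp
    rw [hV, add_mulVec, smul_mulVec, one_mulVec, dotProduct_add, dotProduct_smul, smul_eq_mul]
    linarith
  have hc : ε' ^ 2 ≤ (h * (ρ ⬝ᵥ φ)) ^ 2 := by
    rw [← sq_abs (h * _)]
    gcongr
  -- This `s` minimises the quadratic once `h² ρᵀVρ` is replaced by its bound `2ε'²`.
  have hq := hquad (h ^ 2 * (ρ ⬝ᵥ φ) / (2 * ε' ^ 2))
  have hlead : (h ^ 2 * (ρ ⬝ᵥ φ) / (2 * ε' ^ 2)) ^ 2 * (ρ ⬝ᵥ V.mulVec ρ)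
      ≤ (h * (ρ ⬝ᵥ φ)) ^ 2 / (2 * ε' ^ 2) := by
    calc _ = (h * (ρ ⬝ᵥ φ) / (2 * ε' ^ 2)) ^ 2 * (h ^ 2 * (ρ ⬝ᵥ V.mulVec ρ)) := by ring
      _ ≤ (h * (ρ ⬝ᵥ φ) / (2 * ε' ^ 2)) ^ 2 * (2 * ε' ^ 2) := by gcongr
      _ = _ := by field_simp
  have hlin : 2 * (h ^ 2 * (ρ ⬝ᵥ φ) / (2 * ε' ^ 2)) * (ρ ⬝ᵥ φ)
      = 2 * ((h * (ρ ⬝ᵥ φ)) ^ 2 / (2 * ε' ^ 2)) := by ring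
  have hhalf : 1 / 2 ≤ (h * (ρ ⬝ᵥ φ)) ^ 2 / (2 * ε' ^ 2) := by
    rw [le_div_iff₀ (by positivity)]
    linarith
  linarith
end

section
/- Let λ > 0, let φ₁, …, φ_{k−1} ∈ ℝ^d, and for each i define Vᵢ = λI + ∑_{j=1}^{i−1} φⱼ φⱼᵀ. If φᵢᵀ Vᵢ^{−1} φᵢ ≥ 1/2 for every i = 1, …, k−1, then det(V_k) ≥ λ^d (3/2)^{k−1}. -/
/-!
Passing from `V i` to `V (i + 1)` is a rank-one update, so by the matrix determinant lemma
(`det_add_vecMulVec_self`) it multiplies the determinant by `1 + φᵢᵀ Vᵢ⁻¹ φᵢ ≥ 3 / 2`. Since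
`det (V 0) = λ ^ d`, the bound follows by induction.
-/

open Matrix

/-- Matrix determinant lemma, with the `1 × 1` determinant evaluated as a scalar. -/
theorem det_add_vecMulVec_self {n : Type*} [Fintype n] [DecidableEq n]
    {A : Matrix n n ℝ} (hA : IsUnit A.det) (u : n → ℝ) :
    (A + vecMulVec u u).det = A.det * (1 + u ⬝ᵥ A⁻¹ *ᵥ u) := by
  rw [vecMulVec_eq Unit, det_add_replicateCol_mul_replicateRow hA, det_unique (n := Unit),
    Matrix.mul_assoc, ← replicateCol_mulVec]
  simp [Matrix.add_apply, replicateRow_mul_replicateCol_apply]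

/-- Step 2 (lower bound) of the eluder dimension bound: if
`Vᵢ = λI + ∑_{j<i} φⱼφⱼᵀ` and `φᵢᵀVᵢ⁻¹φᵢ ≥ 1/2` for each of the `k−1` vectors
`φ₀,…,φ_{k−2}`, then `det(V_{k−1}) ≥ λ^d (3/2)^{k−1}`. -/
theorem stmt_10 (d k : ℕ) (lam : ℝ) (hlam : 0 < lam) (φ : ℕ → Fin d → ℝ)
    (V : ℕ → Matrix (Fin d) (Fin d) ℝ)
    (hV : ∀ i, V i = lam • (1 : Matrix (Fin d) (Fin d) ℝ) +
      ∑ j ∈ Finset.range i, Matrix.vecMulVec (φ j) (φ j))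
    (h : ∀ i < k - 1, 1 / 2 ≤ φ i ⬝ᵥ (V i)⁻¹.mulVec (φ i)) :
    lam ^ d * (3 / 2 : ℝ) ^ (k - 1) ≤ (V (k - 1)).det := by
  -- The bound at index `i` makes `det (V i)` positive, hence `V i` invertible, which is all
  -- the determinant lemma needs at the next step; positive definiteness is not required.
  have key : ∀ i ≤ k - 1, lam ^ d * (3 / 2 : ℝ) ^ i ≤ (V i).det := by
    intro i
    induction i with
    | zero => intro _; simp [hV 0]
    | succ i ih =>
      intro hi
      have hdet := ih (by omega)
      have hpos : 0 < (V i).det := lt_of_lt_of_le (by positivity) hdet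
      have hstep : V (i + 1) = V i + vecMulVec (φ i) (φ i) := by
        rw [hV (i + 1), hV i, Finset.sum_range_succ, add_assoc]
      rw [hstep, det_add_vecMulVec_self hpos.ne'.isUnit, pow_succ, ← mul_assoc]
      have hq := h i (by omega)
      exact mul_le_mul hdet (by linarith) (by norm_num) hpos.le
  exact key (k - 1) le_rfl
end

section
/- Let x > 0, α > 0, and B > 0 be real numbers with αB ≥ 1. If (1 + x)^B ≤ αB + 1, then B ≤ ((1+x)/x) · (e/(e−1)) · (log(2α) + log((1+x)/x)). -/
/-!
Write `r = (1 + x) / x`. Since `1 ≤ α * B`, taking logarithms in the hypothesis gives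
`B * log (1 + x) ≤ log (2 * α * B)`, and `1 / r ≤ log (1 + x)`. Hence `u = B / r` satisfies
`u ≤ log (2 * α) + log r + log u`. The bound `log u ≤ u / e` (`log_le_div_exp_one`) absorbs the
last term, leaving `u * (1 - 1 / e) ≤ log (2 * α) + log r`.
-/

/-- The line `y / e` is the tangent to `log` at `e`; this is `log z ≤ z - 1` at `z = y / e`. -/
lemma log_le_div_exp_one {y : ℝ} (hy : 0 < y) : Real.log y ≤ y / Real.exp 1 := by
  have h := Real.log_le_sub_one_of_pos (div_pos hy (Real.exp_pos 1))
  rw [Real.log_div hy.ne' (Real.exp_pos 1).ne', Real.log_exp] at h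
  linarith

/-- Step 3 of the eluder dimension bound: for reals `x, α, B > 0` with `αB ≥ 1`,
if `(1+x)^B ≤ αB + 1` then
`B ≤ ((1+x)/x)(e/(e−1))(log(2α) + log((1+x)/x))`. -/
theorem stmt_13 (x α B : ℝ) (hx : 0 < x) (hα : 0 < α) (hB : 0 < B)
    (hαB : 1 ≤ α * B) (h : (1 + x) ^ B ≤ α * B + 1) :
    B ≤ ((1 + x) / x) * (Real.exp 1 / (Real.exp 1 - 1)) *
      (Real.log (2 * α) + Real.log ((1 + x) / x)) := by
  have h1x : 0 < 1 + x := by linarith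
  have he : 0 < Real.exp 1 - 1 := by
    have := Real.add_one_lt_exp (one_ne_zero : (1 : ℝ) ≠ 0)
    linarith
  set r : ℝ := (1 + x) / x with hr
  have hr0 : 0 < r := div_pos h1x hx
  have hlog : 1 / r ≤ Real.log (1 + x) := by
    have := Real.one_sub_inv_le_log_of_pos h1x
    have h2 : 1 / r = 1 - (1 + x)⁻¹ := by
      rw [hr]; field_simp; ring
    linarith
  have h3 : B * Real.log (1 + x) ≤ Real.log (2 * α) + Real.log B := by
    rw [← Real.log_rpow h1x, ← Real.log_mul (by positivity) hB.ne']
    exact Real.log_le_log (Real.rpow_pos_of_pos h1x B) (by linarith)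
  have hu : 0 < B / r := div_pos hB hr0
  have h4 : Real.log B ≤ B / r / Real.exp 1 + Real.log r := by
    have := log_le_div_exp_one hu
    rw [Real.log_div hB.ne' hr0.ne'] at this
    linarith
  have h5 : B / r ≤ B * Real.log (1 + x) := by
    have := mul_le_mul_of_nonneg_left hlog hB.le
    rwa [mul_one_div] at this
  have h6 : B / r - B / r / Real.exp 1 ≤ Real.log (2 * α) + Real.log r := by linarith
  have h7 : B = r * (Real.exp 1 / (Real.exp 1 - 1)) * (B / r - B / r / Real.exp 1) := by
    have := Real.exp_pos 1
    field_simp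
  calc B = _ := h7
    _ ≤ _ := mul_le_mul_of_nonneg_left h6 (by positivity)
end

section
/- Let (Ω, 𝓕, P) be a probability space with a filtration (𝓗_n)_{n≥0}, and let (Z_n)_{n≥1} be a sequence of real-valued random variables adapted to (𝓗_n) such that E[exp(λZ_i)] is finite for all λ. Define μ_i = E[Z_i | 𝓗_{i−1}] and ψ_i(λ) = log E[exp(λ(Z_i − μ_i)) | 𝓗_{i−1}]. Then for all x ≥ 0, λ ≥ 0, and n ∈ ℕ: P(∑_{i=1}^n λZ_i ≤ x + ∑_{i=1}^n [λμ_i + ψ_i(λ)]) ≥ 1 − e^{−x}. -/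
/-!
The process `M n = exp (∑_{i ≤ n} (l Z i - l μ i - ψ i l))` has expectation one: since
`exp (ψ i l)` is the conditional expectation of `exp (l (Z i - μ i))` given the past, each factor
has conditional mean one (`lintegral_mul_condExp`). Markov's inequality for `M n` at level `exp x`
then bounds the probability of the complementary event by `exp (-x)`.

Finiteness of the exponential moments of `Z i` has to be transferred to `Z i - μ i`, for otherwise
the conditional expectation defining `ψ i l` would be the default value `0`
(`integrable_exp_centered`). This uses conditional Jensen, `exp (s μ i) ≤ E[exp (s Z i) | past]`,
together with `exp (a + b) ≤ exp (2 a) + exp (2 b)`. Jensen also gives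
`0 < E[exp (l (Z i - μ i)) | past]`, so that the logarithm in `ψ i l` is genuine.
-/

open MeasureTheory

/-- Pulling a known factor out of a conditional expectation, for Lebesgue integrals, so that no
integrability of the product is needed. -/
lemma lintegral_mul_condExp {Ω : Type*} {m m0 : MeasurableSpace Ω} (hm : m ≤ m0) (P : Measure Ω)
    [IsProbabilityMeasure P] {X : Ω → ℝ} (hXm : Measurable X) (hX : Integrable X P)
    (hX0 : 0 ≤ X) {g : Ω → ENNReal} (hg : Measurable[m] g) :
    ∫⁻ ω, ENNReal.ofReal ((P[X | m]) ω) * g ω ∂P = ∫⁻ ω, ENNReal.ofReal (X ω) * g ω ∂P := by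
  have hCm : Measurable fun ω => ENNReal.ofReal ((P[X | m]) ω) :=
    (stronglyMeasurable_condExp.mono hm).measurable.ennreal_ofReal
  have hXo : Measurable fun ω => ENNReal.ofReal (X ω) := hXm.ennreal_ofReal
  -- The measures with densities `E[X | m]` and `X` agree on `m`.
  have key : (P.withDensity fun ω => ENNReal.ofReal ((P[X | m]) ω)).trim hm =
      (P.withDensity fun ω => ENNReal.ofReal (X ω)).trim hm := by
    refine @Measure.ext _ m _ _ fun s hs => ?_
    rw [trim_measurableSet_eq hm hs, trim_measurableSet_eq hm hs,
      withDensity_apply _ (hm s hs), withDensity_apply _ (hm s hs),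
      ← setLIntegral_condLExp hm P (fun ω => ENNReal.ofReal (X ω)) hs]
    refine lintegral_congr_ae (ae_restrict_of_ae ?_)
    exact (condLExp_ofReal m hX (Filter.Eventually.of_forall hX0)).symm
  have h1 := lintegral_withDensity_eq_lintegral_mul P hCm (hg.mono hm le_rfl)
  have h2 := lintegral_withDensity_eq_lintegral_mul P hXo (hg.mono hm le_rfl)
  simp only [Pi.mul_apply] at h1 h2
  rw [← h1, ← h2, ← lintegral_trim hm hg, ← lintegral_trim hm hg, key]

lemma condExp_exp_jensen {Ω : Type*} {m m0 : MeasurableSpace Ω} (hm : m ≤ m0) (P : Measure Ω)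
    [IsProbabilityMeasure P] {Y : Ω → ℝ} (hY : Integrable Y P)
    (hexp : Integrable (fun ω => Real.exp (Y ω)) P) :
    (fun ω => Real.exp ((P[Y | m]) ω)) ≤ᵐ[P] P[fun ω => Real.exp (Y ω) | m] :=
  convexOn_exp.map_condExp_le_univ hm Real.continuous_exp.lowerSemicontinuous hY hexp

lemma integrable_of_exp {Ω : Type*} {m0 : MeasurableSpace Ω} (P : Measure Ω)
    {Z : Ω → ℝ} (hZ : Measurable Z)
    (hint : ∀ l : ℝ, Integrable (fun ω => Real.exp (l * Z ω)) P) : Integrable Z P := by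
  refine ((hint 1).add (hint (-1))).mono' hZ.aestronglyMeasurable
    (Filter.Eventually.of_forall fun ω => ?_)
  simp only [Pi.add_apply, Real.norm_eq_abs]
  have h1 := Real.add_one_le_exp (1 * Z ω)
  have h2 := Real.add_one_le_exp (-1 * Z ω)
  have h3 := Real.exp_pos (1 * Z ω)
  have h4 := Real.exp_pos (-1 * Z ω)
  exact abs_le.2 ⟨by linarith, by linarith⟩

lemma integrable_exp_condExp {Ω : Type*} {m m0 : MeasurableSpace Ω} (hm : m ≤ m0) (P : Measure Ω)
    [IsProbabilityMeasure P] {Z : Ω → ℝ} (hZ : Measurable Z)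
    (hint : ∀ l : ℝ, Integrable (fun ω => Real.exp (l * Z ω)) P) (s : ℝ) :
    Integrable (fun ω => Real.exp (s * (P[Z | m]) ω)) P := by
  have hZi := integrable_of_exp P hZ hint
  have hmeas : Measurable (P[Z | m]) := (stronglyMeasurable_condExp.mono hm).measurable
  have hsm : P[fun ω => s * Z ω | m] =ᵐ[P] fun ω => s * (P[Z | m]) ω := condExp_smul s Z m
  refine (integrable_condExp (m := m) (f := fun ω => Real.exp (s * Z ω))).mono'
    (by fun_prop) ?_
  filter_upwards [condExp_exp_jensen hm P (hZi.const_mul s) (hint s), hsm] with ω h1 h2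
  rw [h2] at h1
  rwa [Real.norm_eq_abs, Real.abs_exp]

/-- Centering at the conditional mean preserves finiteness of all exponential moments. -/
lemma integrable_exp_centered {Ω : Type*} {m m0 : MeasurableSpace Ω} (hm : m ≤ m0) (P : Measure Ω)
    [IsProbabilityMeasure P] {Z : Ω → ℝ} (hZ : Measurable Z)
    (hint : ∀ l : ℝ, Integrable (fun ω => Real.exp (l * Z ω)) P) (l : ℝ) :
    Integrable (fun ω => Real.exp (l * (Z ω - (P[Z | m]) ω))) P := by
  have hmeas : Measurable (P[Z | m]) := (stronglyMeasurable_condExp.mono hm).measurable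
  refine ((hint (2 * l)).add (integrable_exp_condExp hm P hZ hint (-2 * l))).mono'
    (by fun_prop) (Filter.Eventually.of_forall fun ω => ?_)
  simp only [Pi.add_apply, Real.norm_eq_abs, Real.abs_exp]
  have e1 : Real.exp (2 * l * Z ω) = Real.exp (l * Z ω) ^ 2 := by
    rw [← Real.exp_nat_mul]; congr 1; push_cast; ring
  have e2 : Real.exp (-2 * l * (P[Z | m]) ω) = Real.exp (-l * (P[Z | m]) ω) ^ 2 := by
    rw [← Real.exp_nat_mul]; congr 1; push_cast; ring
  have e3 : Real.exp (l * (Z ω - (P[Z | m]) ω)) =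
      Real.exp (l * Z ω) * Real.exp (-l * (P[Z | m]) ω) := by
    rw [← Real.exp_add]; congr 1; ring
  rw [e1, e2, e3]
  nlinarith [sq_nonneg (Real.exp (l * Z ω) - Real.exp (-l * (P[Z | m]) ω)),
    sq_nonneg (Real.exp (l * Z ω)), sq_nonneg (Real.exp (-l * (P[Z | m]) ω))]

/-- Martingale exponential inequality (Russo and Van Roy): for random variables
`(Z_n)` adapted to a filtration `(𝓗_n)` with all exponential moments finite,
setting `μ_i = E[Z_i | 𝓗_{i−1}]` and
`ψ_i(λ) = log E[exp(λ(Z_i − μ_i)) | 𝓗_{i−1}]`, for all `x ≥ 0`, `λ ≥ 0`, `n`: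
`P(∑_{i=1}^n λZ_i ≤ x + ∑_{i=1}^n [λμ_i + ψ_i(λ)]) ≥ 1 − e^{−x}`. -/
theorem stmt_15 {Ω : Type*} {m0 : MeasurableSpace Ω} (P : Measure Ω)
    [IsProbabilityMeasure P] (ℋ : Filtration ℕ m0) (Z : ℕ → Ω → ℝ)
    (hadapted : ∀ i, StronglyMeasurable[ℋ i] (Z i))
    (hint : ∀ (i : ℕ) (l : ℝ), Integrable (fun ω => Real.exp (l * Z i ω)) P)
    (μ : ℕ → Ω → ℝ) (hμ : ∀ i, μ i = P[Z i | ℋ (i - 1)])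
    (ψ : ℕ → ℝ → Ω → ℝ)
    (hψ : ∀ i l, ψ i l = fun ω =>
      Real.log ((P[fun ω' => Real.exp (l * (Z i ω' - μ i ω')) | ℋ (i - 1)]) ω)) :
    ∀ x ≥ (0 : ℝ), ∀ l ≥ (0 : ℝ), ∀ n : ℕ,
      ENNReal.ofReal (1 - Real.exp (-x)) ≤
        P {ω | ∑ i ∈ Finset.Icc 1 n, l * Z i ω ≤
          x + ∑ i ∈ Finset.Icc 1 n, (l * μ i ω + ψ i l ω)} := by
  intro x _ l _ n
  have hZm : ∀ i, Measurable[ℋ i] (Z i) := fun i => (hadapted i).measurable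
  have hZ0 : ∀ i, Measurable (Z i) := fun i => (hZm i).mono (ℋ.le i) le_rfl
  have hμm : ∀ i, Measurable[ℋ (i - 1)] (μ i) := fun i => by
    rw [hμ i]; exact stronglyMeasurable_condExp.measurable
  have hψm : ∀ i, Measurable[ℋ (i - 1)] (ψ i l) := fun i => by
    rw [hψ i l]; exact Real.measurable_log.comp stronglyMeasurable_condExp.measurable
  have hXi : ∀ i, Integrable (fun ω => Real.exp (l * (Z i ω - μ i ω))) P := fun i => by
    rw [hμ i]; exact integrable_exp_centered (ℋ.le _) P (hZ0 i) (hint i) l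
  have hX0 : ∀ i, Measurable fun ω => Real.exp (l * (Z i ω - μ i ω)) := fun i => by
    have h1 := hZ0 i
    have h2 := (hμm i).mono (ℋ.le _) le_rfl
    fun_prop
  have hexpψ : ∀ i, ∀ᵐ ω ∂P, Real.exp (ψ i l ω) =
      (P[fun ω' => Real.exp (l * (Z i ω' - μ i ω')) | ℋ (i - 1)]) ω := fun i => by
    have hY : Integrable (fun ω => l * (Z i ω - μ i ω)) P := by
      refine ((integrable_of_exp P (hZ0 i) (hint i)).sub ?_).const_mul l
      rw [hμ i]; exact integrable_condExp
    filter_upwards [condExp_exp_jensen (ℋ.le (i - 1)) P hY (hXi i)] with ω h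
    rw [hψ i l]
    exact Real.exp_log ((Real.exp_pos _).trans_le h)
  -- The exponent of the martingale.
  let S : ℕ → Ω → ℝ := fun n ω => ∑ i ∈ Finset.Icc 1 n, (l * Z i ω - (l * μ i ω + ψ i l ω))
  have hSm : ∀ n, Measurable[ℋ n] (S n) := fun n => by
    refine Finset.measurable_fun_sum _ fun i hi => ?_
    have hin : i ≤ n := (Finset.mem_Icc.1 hi).2
    have h1 : Measurable[ℋ n] (Z i) := (hZm i).mono (ℋ.mono hin) le_rfl
    have h2 : Measurable[ℋ n] (μ i) := (hμm i).mono (ℋ.mono (by omega)) le_rfl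
    have h3 : Measurable[ℋ n] (ψ i l) := (hψm i).mono (ℋ.mono (by omega)) le_rfl
    exact (h1.const_mul l).sub ((h2.const_mul l).add h3)
  have hM : ∀ n, ∫⁻ ω, ENNReal.ofReal (Real.exp (S n ω)) ∂P = 1 := fun n => by
    induction n with
    | zero => simp [S]
    | succ n ih =>
      have hψn : Measurable[ℋ n] (ψ (n + 1) l) := hψm (n + 1)
      have hg : Measurable[ℋ n] fun ω => ENNReal.ofReal (Real.exp (S n ω - ψ (n + 1) l ω)) :=
        (Real.measurable_exp.comp ((hSm n).sub hψn)).ennreal_ofReal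
      have key := lintegral_mul_condExp (ℋ.le n) P (hX0 (n + 1)) (hXi (n + 1))
        (fun ω => (Real.exp_pos _).le) hg
      rw [← ih]
      trans ∫⁻ ω, ENNReal.ofReal (Real.exp (l * (Z (n + 1) ω - μ (n + 1) ω))) *
          ENNReal.ofReal (Real.exp (S n ω - ψ (n + 1) l ω)) ∂P
      · refine lintegral_congr fun ω => ?_
        rw [← ENNReal.ofReal_mul (Real.exp_pos _).le, ← Real.exp_add]
        congr 2
        simp only [S]
        rw [Finset.sum_Icc_succ_top (by omega)]
        ring
      · rw [← key]
        refine lintegral_congr_ae ?_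
        filter_upwards [hexpψ (n + 1)] with ω h
        rw [Nat.add_sub_cancel] at h
        rw [← h, ← ENNReal.ofReal_mul (Real.exp_pos _).le, ← Real.exp_add]
        congr 2
        ring
  set A := {ω | ∑ i ∈ Finset.Icc 1 n, l * Z i ω ≤
          x + ∑ i ∈ Finset.Icc 1 n, (l * μ i ω + ψ i l ω)} with hA
  have hsub : Aᶜ ⊆ {ω | ENNReal.ofReal (Real.exp x) ≤ ENNReal.ofReal (Real.exp (S n ω))} := by
    intro ω hω
    simp only [hA, Set.mem_compl_iff, Set.mem_ofPred_eq, not_le] at hω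
    refine ENNReal.ofReal_le_ofReal (Real.exp_le_exp.2 ?_)
    simp only [S]
    rw [Finset.sum_sub_distrib]
    linarith
  have hmk := mul_meas_ge_le_lintegral (μ := P)
    (Real.measurable_exp.comp ((hSm n).mono (ℋ.le n) le_rfl)).ennreal_ofReal
    (ENNReal.ofReal (Real.exp x))
  have hmk' : ENNReal.ofReal (Real.exp x) * P Aᶜ ≤ 1 :=
    (mul_le_mul_right (measure_mono hsub) _).trans (hmk.trans (hM n).le)
  have hc : P Aᶜ ≤ ENNReal.ofReal (Real.exp (-x)) := by
    rw [Real.exp_neg, ENNReal.ofReal_inv_of_pos (Real.exp_pos x), ← one_div]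
    refine (ENNReal.le_div_iff_mul_le (Or.inl ?_) (Or.inl ENNReal.ofReal_ne_top)).2 ?_
    · simpa using Real.exp_pos x
    · rwa [mul_comm]
  rw [ENNReal.ofReal_sub _ (Real.exp_pos _).le, ENNReal.ofReal_one, tsub_le_iff_right]
  calc (1 : ENNReal) = P (A ∪ Aᶜ) := by simp
    _ ≤ P A + P Aᶜ := measure_union_le _ _
    _ ≤ _ := by gcongr
end

section
/- Let (Ω, 𝓕, P) be a probability space with a filtration (𝓗_t)_{t≥0}. Let (ε_t)_{t≥1} be adapted to (𝓗_t) with E[ε_t | 𝓗_{t−1}] = 0 and |ε_t| ≤ 1 almost surely, and let (g_t)_{t≥1} be real-valued random variables with g_t measurable with respect to 𝓗_{t−1}. Then for every δ > 0, with probability at least 1 − δ, for all t ∈ ℕ: ∑_{k=1}^{t−1} (g_k² − 2 g_k ε_k) ≥ (1/2) ∑_{k=1}^{t−1} g_k² − 4 log(1/δ). -/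
/-!
Put `b(x) = exp(-x²/8) sinh(x/2)`, so that `|b| ≤ 1`. Convexity of the exponential
together with `cosh(x/2) ≤ exp(x²/8)` gives, for `|e| ≤ 1`, the pointwise bound
`exp(x e / 2 - x² / 8) ≤ 1 + b(x) e` (`exp_le_one_add_tiltCoeff_mul`). Hence, almost surely, the exponential
process `exp (∑ k ≤ n, (g_k ε_k / 2 - g_k² / 8))` is dominated by
`N_n = ∏ k ≤ n, (1 + b(g_k) ε_k)`, which is an almost surely nonnegative martingale of mean `1`
(`martingale_tiltProd`). The coefficients `b(g_k)` are bounded even though the `g_k` are not, so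
integrability is automatic and no conditional moment generating function is needed.

Doob's maximal inequality and monotone convergence give `P(∃ n, 1/δ ≤ N_n) ≤ δ`
(`measure_exists_le_of_martingale`). Almost surely off this event the logarithm of the exponential process stays
below `log(1/δ)`, and multiplying by `4` gives the claim.
-/

open MeasureTheory

/-- The coefficient `b(x) = exp(-x²/8) sinh(x/2)` of the linear majorant of
`e ↦ exp(x e / 2 - x² / 8)` on `[-1, 1]`. -/
noncomputable def tiltCoeff (x : ℝ) : ℝ := Real.exp (-(x ^ 2 / 8)) * Real.sinh (x / 2)

lemma exp_mul_cosh_half_le_one (x : ℝ) :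
    Real.exp (-(x ^ 2 / 8)) * Real.cosh (x / 2) ≤ 1 := by
  have h : Real.cosh (x / 2) ≤ Real.exp (x ^ 2 / 8) := by
    refine (Real.cosh_le_exp_half_sq (x / 2)).trans_eq ?_
    congr 1
    ring
  calc Real.exp (-(x ^ 2 / 8)) * Real.cosh (x / 2)
      ≤ Real.exp (-(x ^ 2 / 8)) * Real.exp (x ^ 2 / 8) := by gcongr
    _ = 1 := by rw [← Real.exp_add]; simp

lemma abs_tiltCoeff_le_one (x : ℝ) : |tiltCoeff x| ≤ 1 := by
  refine le_trans ?_ (exp_mul_cosh_half_le_one x)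
  rw [tiltCoeff, abs_mul, abs_of_pos (Real.exp_pos _), Real.abs_sinh, ← Real.cosh_abs (x / 2)]
  gcongr
  exact (Real.sinh_lt_cosh _).le

/-- Hoeffding's lemma in pointwise form: taking expectations over a centred `e ∈ [-1, 1]` kills
the linear term. -/
lemma exp_le_one_add_tiltCoeff_mul (x : ℝ) {e : ℝ} (he : |e| ≤ 1) :
    Real.exp (x * e / 2 - x ^ 2 / 8) ≤ 1 + tiltCoeff x * e := by
  have h := Real.exp_mul_le_cosh_add_mul_sinh he (x / 2)
  have h1 := exp_mul_cosh_half_le_one x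
  have h2 : Real.exp (x * e / 2 - x ^ 2 / 8)
      = Real.exp (-(x ^ 2 / 8)) * Real.exp (e * (x / 2)) := by
    rw [← Real.exp_add]; congr 1; ring
  have h3 := mul_le_mul_of_nonneg_left h (Real.exp_pos (-(x ^ 2 / 8))).le
  rw [h2, tiltCoeff]
  linarith

/-- The process `N_n = ∏_{k=1}^n (1 + b(g_k) ε_k)`. -/
noncomputable def tiltProd {Ω : Type*} (ε g : ℕ → Ω → ℝ) (n : ℕ) (ω : Ω) : ℝ :=
  ∏ k ∈ Finset.Icc 1 n, (1 + tiltCoeff (g k ω) * ε k ω)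

section

variable {Ω : Type*} {m0 : MeasurableSpace Ω} {P : Measure Ω} {ℋ : Filtration ℕ m0}
  {ε g : ℕ → Ω → ℝ}

lemma tiltProd_succ (n : ℕ) (ω : Ω) :
    tiltProd ε g (n + 1) ω
      = tiltProd ε g n ω * (1 + tiltCoeff (g (n + 1) ω) * ε (n + 1) ω) := by
  rw [tiltProd, Finset.prod_Icc_succ_top (by omega), tiltProd]

lemma exp_sum_le_tiltProd {ω : Ω} (hω : ∀ t, |ε t ω| ≤ 1) (n : ℕ) :
    Real.exp (∑ k ∈ Finset.Icc 1 n, (g k ω * ε k ω / 2 - g k ω ^ 2 / 8)) ≤ tiltProd ε g n ω := by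
  rw [Real.exp_sum, tiltProd]
  exact Finset.prod_le_prod (fun _ _ => (Real.exp_pos _).le)
    fun k _ => exp_le_one_add_tiltCoeff_mul _ (hω k)

lemma abs_tiltProd_le {ω : Ω} (hω : ∀ t, |ε t ω| ≤ 1) (n : ℕ) :
    |tiltProd ε g n ω| ≤ 2 ^ n := by
  rw [tiltProd, Finset.abs_prod]
  refine (Finset.prod_le_prod (g := fun _ => (2 : ℝ)) (fun _ _ => abs_nonneg _)
    fun k _ => ?_).trans_eq (by simp)
  calc |1 + tiltCoeff (g k ω) * ε k ω| ≤ |1| + |tiltCoeff (g k ω) * ε k ω| := abs_add_le _ _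
    _ ≤ 1 + 1 * 1 := by
      rw [abs_mul, abs_one]
      gcongr
      exacts [abs_tiltCoeff_le_one _, hω k]
    _ = 2 := by norm_num

lemma stronglyMeasurable_tiltCoeff {m : MeasurableSpace Ω} {f : Ω → ℝ}
    (hf : StronglyMeasurable[m] f) : StronglyMeasurable[m] fun ω => tiltCoeff (f ω) := by
  have hc : Continuous tiltCoeff := by unfold tiltCoeff; fun_prop
  exact hc.comp_stronglyMeasurable hf

lemma stronglyAdapted_tiltProd (hεadapted : ∀ t, StronglyMeasurable[ℋ t] (ε t))
    (hg : ∀ t, 1 ≤ t → StronglyMeasurable[ℋ (t - 1)] (g t)) :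
    StronglyAdapted ℋ (tiltProd ε g) := by
  intro n
  refine Finset.stronglyMeasurable_fun_prod _ fun k hk => ?_
  obtain ⟨hk1, hkn⟩ := Finset.mem_Icc.1 hk
  have h1 : StronglyMeasurable[ℋ n] (ε k) := (hεadapted k).mono (ℋ.mono hkn)
  have h2 : StronglyMeasurable[ℋ n] (g k) := (hg k hk1).mono (ℋ.mono (by omega))
  exact stronglyMeasurable_const.add ((stronglyMeasurable_tiltCoeff h2).mul h1)

lemma martingale_tiltProd [IsProbabilityMeasure P]
    (hεadapted : ∀ t, StronglyMeasurable[ℋ t] (ε t))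
    (hεcond : ∀ t, 1 ≤ t → P[ε t | ℋ (t - 1)] =ᵐ[P] 0)
    (hεbdd : ∀ᵐ ω ∂P, ∀ t, |ε t ω| ≤ 1)
    (hg : ∀ t, 1 ≤ t → StronglyMeasurable[ℋ (t - 1)] (g t)) :
    Martingale (tiltProd ε g) ℋ P := by
  have hadp := stronglyAdapted_tiltProd hεadapted hg
  have hint : ∀ n, Integrable (tiltProd ε g n) P := fun n =>
    Integrable.of_bound ((hadp n).mono (ℋ.le n)).aestronglyMeasurable (2 ^ n)
      (hεbdd.mono fun ω hω => abs_tiltProd_le hω n)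
  have hεint : ∀ n, Integrable (ε n) P := fun n =>
    Integrable.of_bound ((hεadapted n).mono (ℋ.le n)).aestronglyMeasurable 1
      (hεbdd.mono fun ω hω => hω n)
  refine martingale_nat hadp hint fun n => ?_
  -- the increment is `h * ε (n + 1)` with `h` bounded and measurable at time `n`
  let h : Ω → ℝ := fun ω => tiltProd ε g n ω * tiltCoeff (g (n + 1) ω)
  have hh : StronglyMeasurable[ℋ n] h :=
    (hadp n).mul (stronglyMeasurable_tiltCoeff (hg (n + 1) (by omega)))
  have hhb : ∀ᵐ ω ∂P, ‖h ω‖ ≤ 2 ^ n := by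
    filter_upwards [hεbdd] with ω hω
    rw [Real.norm_eq_abs, abs_mul]
    simpa using mul_le_mul (abs_tiltProd_le (g := g) hω n) (abs_tiltCoeff_le_one (g (n + 1) ω))
      (abs_nonneg _) (by positivity)
  have hsplit : tiltProd ε g (n + 1) = tiltProd ε g n + h * ε (n + 1) := by
    ext ω
    simp only [tiltProd_succ, Pi.add_apply, Pi.mul_apply, h]
    ring
  have hhε : Integrable (h * ε (n + 1)) P :=
    (hεint (n + 1)).bdd_mul (hh.mono (ℋ.le n)).aestronglyMeasurable hhb
  have hpull : P[h * ε (n + 1) | ℋ n] =ᵐ[P] h * P[ε (n + 1) | ℋ n] :=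
    condExp_stronglyMeasurable_mul_of_bound (ℋ.le n) hh (hεint _) _ hhb
  have hzero : P[ε (n + 1) | ℋ n] =ᵐ[P] 0 := hεcond (n + 1) (by omega)
  rw [hsplit]
  filter_upwards [condExp_add (hint n) hhε (ℋ n), hpull, hzero] with ω h1 h2 h3
  rw [h1, Pi.add_apply, h2, Pi.mul_apply, h3,
    condExp_of_stronglyMeasurable (ℋ.le n) (hadp n) (hint n)]
  simp

/-- Ville's inequality for an almost surely nonnegative martingale of mean one. -/
lemma measure_exists_le_of_martingale [IsProbabilityMeasure P] {N : ℕ → Ω → ℝ}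
    (hN : Martingale N ℋ P) (hpos : ∀ n, 0 ≤ᵐ[P] N n) (hmean : ∫ ω, N 0 ω ∂P = 1)
    {δ : ℝ} (hδ : 0 < δ) :
    P {ω | ∃ n, 1 / δ ≤ N n ω} ≤ ENNReal.ofReal δ := by
  -- the maximal inequality asks for nonnegativity everywhere, hence the positive part
  have hsub : Submartingale (N⁺) ℋ P := hN.submartingale.pos
  have hnonneg : 0 ≤ N⁺ := posPart_nonneg N
  have hint : ∀ n, ∫ ω, (N⁺) n ω ∂P = 1 := by
    intro n
    have h1 : ∫ ω, (N⁺) n ω ∂P = ∫ ω, N n ω ∂P := by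
      refine integral_congr_ae ?_
      filter_upwards [hpos n] with ω hω
      exact sup_of_le_left hω
    have h2 := hN.setIntegral_eq (Nat.zero_le n) MeasurableSet.univ
    rw [setIntegral_univ, setIntegral_univ] at h2
    rw [h1, ← h2, hmean]
  let c : NNReal := ⟨1 / δ, by positivity⟩
  let A : ℕ → Set Ω := fun n => {ω | (c : ℝ) ≤
    (Finset.range (n + 1)).sup' Finset.nonempty_range_add_one fun k => (N⁺) k ω}
  have hA : ∀ n, P (A n) ≤ ENNReal.ofReal δ := by
    intro n
    have h := maximal_ineq hsub hnonneg (ε := c) n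
    have h' : (c : ENNReal) * P (A n) ≤ 1 := by
      refine h.trans ?_
      rw [← ENNReal.ofReal_one, ← hint n]
      exact ENNReal.ofReal_le_ofReal
        (setIntegral_le_integral (hsub.integrable n) (.of_forall (hnonneg n)))
    have hc : ENNReal.ofReal δ * (c : ENNReal) = 1 := by
      rw [← ENNReal.ofReal_coe_nnreal, ← ENNReal.ofReal_mul hδ.le]
      have hcδ : δ * (c : ℝ) = 1 := mul_one_div_cancel hδ.ne'
      rw [hcδ, ENNReal.ofReal_one]
    calc P (A n) = ENNReal.ofReal δ * (c * P (A n)) := by rw [← mul_assoc, hc, one_mul]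
      _ ≤ ENNReal.ofReal δ * 1 := by gcongr
      _ = ENNReal.ofReal δ := mul_one _
  have hmono : Monotone A := by
    intro i j hij ω hω
    have hω' : (c : ℝ) ≤ (Finset.range (i + 1)).sup' Finset.nonempty_range_add_one
      fun k => (N⁺) k ω := hω
    exact hω'.trans (Finset.sup'_mono _ (Finset.range_mono (by omega)) _)
  have hsubset : {ω | ∃ n, 1 / δ ≤ N n ω} ⊆ ⋃ n, A n := by
    rintro ω ⟨n, hn⟩
    refine Set.mem_iUnion.2 ⟨n, ?_⟩
    refine le_trans (le_trans hn ?_) (Finset.le_sup' (fun k => (N⁺) k ω)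
      (Finset.mem_range.2 n.lt_succ_self))
    exact le_sup_left
  refine (measure_mono hsubset).trans ?_
  rw [hmono.measure_iUnion]
  exact iSup_le hA

end

/-- Lemma 3 of the paper (least-squares concentration): if `(ε_t)` is adapted
noise with `E[ε_t | 𝓗_{t−1}] = 0` and `|ε_t| ≤ 1` a.s., and `g_t` is
`𝓗_{t−1}`-measurable, then with probability at least `1 − δ`, for all `t`:
`∑_{k=1}^{t−1} (g_k² − 2g_kε_k) ≥ (1/2)∑_{k=1}^{t−1} g_k² − 4 log(1/δ)`. -/
theorem stmt_16 {Ω : Type*} {m0 : MeasurableSpace Ω} (P : Measure Ω)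
    [IsProbabilityMeasure P] (ℋ : Filtration ℕ m0)
    (ε g : ℕ → Ω → ℝ)
    (hεadapted : ∀ t, StronglyMeasurable[ℋ t] (ε t))
    (hεcond : ∀ t, 1 ≤ t → P[ε t | ℋ (t - 1)] =ᵐ[P] 0)
    (hεbdd : ∀ t, ∀ᵐ ω ∂P, |ε t ω| ≤ 1)
    (hg : ∀ t, 1 ≤ t → StronglyMeasurable[ℋ (t - 1)] (g t))
    (δ : ℝ) (hδ : 0 < δ) :
    ENNReal.ofReal (1 - δ) ≤
      P {ω | ∀ t : ℕ,
        (1 / 2) * ∑ k ∈ Finset.Icc 1 (t - 1), (g k ω) ^ 2 - 4 * Real.log (1 / δ) ≤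
          ∑ k ∈ Finset.Icc 1 (t - 1), ((g k ω) ^ 2 - 2 * g k ω * ε k ω)} := by
  have hbdd : ∀ᵐ ω ∂P, ∀ t, |ε t ω| ≤ 1 := ae_all_iff.2 hεbdd
  have hmart := martingale_tiltProd hεadapted hεcond hbdd hg
  have hbad := measure_exists_le_of_martingale hmart
    (fun n => hbdd.mono fun ω hω => (Real.exp_pos _).le.trans (exp_sum_le_tiltProd hω n))
    (by simp [tiltProd]) hδ
  set G : Set Ω := {ω | ∀ t : ℕ,
        (1 / 2) * ∑ k ∈ Finset.Icc 1 (t - 1), (g k ω) ^ 2 - 4 * Real.log (1 / δ) ≤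
          ∑ k ∈ Finset.Icc 1 (t - 1), ((g k ω) ^ 2 - 2 * g k ω * ε k ω)} with hG
  have hcompl : P Gᶜ ≤ ENNReal.ofReal δ := by
    refine le_trans (measure_mono_ae ?_) hbad
    filter_upwards [hbdd] with ω hω hωG
    by_contra hsmall
    refine hωG fun t => ?_
    have hlt : tiltProd ε g (t - 1) ω < 1 / δ := by
      by_contra hle
      exact hsmall ⟨t - 1, not_lt.1 hle⟩
    have hlog := (Real.lt_log_iff_exp_lt (by positivity)).2
      ((exp_sum_le_tiltProd hω (t - 1)).trans_lt hlt)
    have hsum : ∑ k ∈ Finset.Icc 1 (t - 1), ((g k ω) ^ 2 - 2 * g k ω * ε k ω)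
        = (1 / 2) * ∑ k ∈ Finset.Icc 1 (t - 1), (g k ω) ^ 2
          - 4 * ∑ k ∈ Finset.Icc 1 (t - 1), (g k ω * ε k ω / 2 - g k ω ^ 2 / 8) := by
      rw [Finset.mul_sum, Finset.mul_sum, ← Finset.sum_sub_distrib]
      exact Finset.sum_congr rfl fun k _ => by ring
    rw [hsum]
    linarith
  rw [ENNReal.ofReal_sub _ hδ.le, ENNReal.ofReal_one, tsub_le_iff_right]
  calc (1 : ENNReal) = P (G ∪ Gᶜ) := by rw [Set.union_compl_self, measure_univ]
    _ ≤ P G + P Gᶜ := measure_union_le _ _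
    _ ≤ P G + ENNReal.ofReal δ := by gcongr
end

section
/- Let S be a set, C > 0, 0 < α ≤ C, δ ∈ (0,1], t ≥ 1 an integer. Let f, f^α, f_θ : S → [0, C] with sup_{s∈S} |f(s) − f^α(s)| ≤ α. Let S₁, …, S_{t−1} ∈ S and let R₁, …, R_{t−1} be real numbers with R_k = f_θ(S_k) + ε_k where |ε_k| ≤ (1/2) log(2t²/δ) for each k < t. Then |(1/2)∑_{k<t}(f^α(S_k) − f_θ(S_k))² − (1/2)∑_{k<t}(f(S_k) − f_θ(S_k))² + ∑_{k<t}(f(S_k) − R_k)² − ∑_{k<t}(f^α(S_k) − R_k)²| ≤ α t (15C/2 + log(2t²/δ)). -/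
/-!
Termwise, with `a = f^α(S_k)`, `b = f(S_k)`, `c = f_θ(S_k)` and `R_k = c + e`, the summand factors as
`(b - a) * ((a + b - 2c)/2 - 2e)`. Here `|b - a| ≤ α`, `|(a + b - 2c)/2| ≤ C` and
`2|e| ≤ log (2t²/δ)`, so each of the `t - 1` summands is at most `α (C + log (2t²/δ))` in absolute
value. Since `C > 0` and the logarithm is nonnegative, this yields the stated bound.
-/

theorem abs_summand_le {a b c e r C α L : ℝ} (ha : a ∈ Set.Icc 0 C) (hb : b ∈ Set.Icc 0 C)
    (hc : c ∈ Set.Icc 0 C) (hab : |b - a| ≤ α) (hr : r = c + e) (he : |e| ≤ (1 / 2) * L) :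
    |(1 / 2) * (a - c) ^ 2 - (1 / 2) * (b - c) ^ 2 + (b - r) ^ 2 - (a - r) ^ 2| ≤ α * (C + L) := by
  have key : (1 / 2) * (a - c) ^ 2 - (1 / 2) * (b - c) ^ 2 + (b - r) ^ 2 - (a - r) ^ 2
      = (b - a) * ((a + b - 2 * c) / 2 - 2 * e) := by
    subst hr; ring
  rw [key, abs_mul]
  obtain ⟨ha0, ha1⟩ := ha
  obtain ⟨hb0, hb1⟩ := hb
  obtain ⟨hc0, hc1⟩ := hc
  obtain ⟨he0, he1⟩ := abs_le.mp he
  have h2 : |(a + b - 2 * c) / 2 - 2 * e| ≤ C + L := abs_le.mpr ⟨by linarith, by linarith⟩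
  exact mul_le_mul hab h2 (abs_nonneg _) ((abs_nonneg _).trans hab)

/-- Deterministic core of the Discretization Error lemma: if
`f, f^α, f_θ : S → [0, C]` with `‖f − f^α‖_∞ ≤ α`, and rewards
`R_k = f_θ(S_k) + ε_k` with `|ε_k| ≤ (1/2)log(2t²/δ)` for `k < t`, then
`|(1/2)‖f^α − f_θ‖²_{E_t} − (1/2)‖f − f_θ‖²_{E_t} + L_t(f) − L_t(f^α)|
  ≤ αt(15C/2 + log(2t²/δ))`. -/
theorem stmt_17 {S : Type*} (C α δ : ℝ) (t : ℕ)
    (hC : 0 < C) (hα0 : 0 < α) (hαC : α ≤ C) (hδ0 : 0 < δ) (hδ1 : δ ≤ 1)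
    (ht : 1 ≤ t)
    (f fα fθ : S → ℝ)
    (hfr : ∀ s, f s ∈ Set.Icc (0 : ℝ) C)
    (hfαr : ∀ s, fα s ∈ Set.Icc (0 : ℝ) C)
    (hfθr : ∀ s, fθ s ∈ Set.Icc (0 : ℝ) C)
    (happrox : ∀ s, |f s - fα s| ≤ α)
    (Sseq : ℕ → S) (R ε : ℕ → ℝ)
    (hR : ∀ k, 1 ≤ k → k < t → R k = fθ (Sseq k) + ε k)
    (hε : ∀ k, 1 ≤ k → k < t → |ε k| ≤ (1 / 2) * Real.log (2 * t ^ 2 / δ)) :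
    |(1 / 2) * ∑ k ∈ Finset.Icc 1 (t - 1), (fα (Sseq k) - fθ (Sseq k)) ^ 2 -
        (1 / 2) * ∑ k ∈ Finset.Icc 1 (t - 1), (f (Sseq k) - fθ (Sseq k)) ^ 2 +
        ∑ k ∈ Finset.Icc 1 (t - 1), (f (Sseq k) - R k) ^ 2 -
        ∑ k ∈ Finset.Icc 1 (t - 1), (fα (Sseq k) - R k) ^ 2| ≤
      α * t * (15 * C / 2 + Real.log (2 * t ^ 2 / δ)) := by
  have ht' : (1 : ℝ) ≤ t := by exact_mod_cast ht
  have hL : 0 ≤ Real.log (2 * t ^ 2 / δ) := by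
    apply Real.log_nonneg
    rw [le_div_iff₀ hδ0]
    nlinarith
  set L := Real.log (2 * t ^ 2 / δ)
  rw [Finset.mul_sum, Finset.mul_sum, ← Finset.sum_sub_distrib, ← Finset.sum_add_distrib,
    ← Finset.sum_sub_distrib]
  calc _ ≤ ∑ k ∈ Finset.Icc 1 (t - 1), α * (C + L) := by
        refine (Finset.abs_sum_le_sum_abs _ _).trans (Finset.sum_le_sum fun k hk => ?_)
        rw [Finset.mem_Icc] at hk
        have hkt : k < t := by omega
        exact abs_summand_le (hfαr _) (hfr _) (hfθr _) (happrox _) (hR k hk.1 hkt)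
          (hε k hk.1 hkt)
    _ = ((t : ℝ) - 1) * (α * (C + L)) := by
        simp [Nat.cast_sub ht]
    _ ≤ t * (α * (15 * C / 2 + L)) := by
        gcongr <;> linarith
    _ = α * t * (15 * C / 2 + L) := by ring
end

section
/- Let S be a set, let F be a class of real-valued functions on S, let T ∈ ℕ, let S₁, …, S_T ∈ S, let (β_t)_{t=1}^T be a nondecreasing sequence of nonnegative reals, and for each t let f̂_t : S → ℝ be any function. Define the confidence set F_t = {f ∈ F : ∑_{k=1}^{t−1} (f(S_k) − f̂_t(S_k))² ≤ β_t} and the width w_{F_t}(s) = sup_{f∈F_t} f(s) − inf_{f∈F_t} f(s). Then for every ε > 0: ∑_{t=1}^T 1(w_{F_t}(S_t) > ε) ≤ (4β_T/ε² + 1) · dim_E(F, ε). -/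
/-!
Fix an integer `K > 4 β_T / ε²` and distribute the rounds of width `> ε`, in order, into `K` lists
of actions, putting each new action into a list on which it is `ε`-independent
(`exists_indep_lists`). Every list is then an eluder sequence, so has length at most `D`, and there
are at most `K * D` wide rounds; `K = ⌊4 β_T / ε²⌋ + 1` gives the bound.

A suitable list always exists. If the width at `s` exceeds `ε`, two functions `f, g` of the
confidence set satisfy `|f s - g s| > ε` (`exists_of_lt_width`). If `s` were dependent on all `K`
lists, `∑ (f - g)²` would exceed `ε²` on each of them, hence `K ε²` on the past rounds; but the
triangle inequality through the center bounds that sum by `4 β_T` (`exists_not_epsDependent`).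
-/

/-- `s` is `ε`-dependent on the list `l` of prior actions with respect to the
function class `F`. -/
def EpsDependent {S : Type*} (F : Set (S → ℝ)) (ε : ℝ) (s : S) (l : List S) : Prop :=
  ∀ f ∈ F, ∀ g ∈ F,
    Real.sqrt ((l.map fun x => (f x - g x) ^ 2).sum) ≤ ε → |f s - g s| ≤ ε

/-- `l` is an eluder sequence for `F` at scale `ε`: for some `ε' ≥ ε`, every
element of `l` is `ε'`-independent of its predecessors.  The `ε`-eluder
dimension of `F` is the length of the longest such sequence. -/
def IsEluderSeq {S : Type*} (F : Set (S → ℝ)) (ε : ℝ) (l : List S) : Prop :=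
  ∃ ε' ≥ ε, ∀ i : Fin l.length, ¬ EpsDependent F ε' (l.get i) (l.take i.val)

/-- Width of a set of functions at an action `s`:
`w_G(s) = sup_{f ∈ G} f(s) − inf_{f ∈ G} f(s)`. -/
noncomputable def width {S : Type*} (G : Set (S → ℝ)) (s : S) : ℝ :=
  sSup ((fun f => f s) '' G) - sInf ((fun f => f s) '' G)

/-- A set of width `> ε` contains two functions more than `ε` apart at `s`. This holds also when
`sSup` or `sInf` takes its junk value `0`, since the values at `s` are then unbounded. -/
lemma exists_of_lt_width {S : Type*} {G : Set (S → ℝ)} {s : S} {ε : ℝ} (hε : 0 < ε)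
    (h : ε < width G s) : ∃ f ∈ G, ∃ g ∈ G, ε < |f s - g s| := by
  by_contra! hc
  rcases G.eq_empty_or_nonempty with rfl | ⟨f₀, hf₀⟩
  · simp [width] at h
    linarith
  have hsup : ∀ g ∈ G, sSup ((fun f => f s) '' G) ≤ g s + ε := by
    intro g hg
    apply csSup_le (Set.Nonempty.image _ ⟨f₀, hf₀⟩)
    rintro _ ⟨f, hf, rfl⟩
    have := le_of_abs_le (hc f hf g hg)
    dsimp only
    linarith
  have hinf : sSup ((fun f => f s) '' G) - ε ≤ sInf ((fun f => f s) '' G) := by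
    apply le_csInf (Set.Nonempty.image _ ⟨f₀, hf₀⟩)
    rintro _ ⟨g, hg, rfl⟩
    have := hsup g hg
    dsimp only
    linarith
  unfold width at h
  linarith

/-- Appending an element `ε`-independent of its predecessors preserves the defining property of an
eluder sequence at the fixed scale `ε`. -/
lemma indep_append {S : Type*} {F : Set (S → ℝ)} {ε : ℝ} {l : List S} {s : S}
    (hl : ∀ i : Fin l.length, ¬ EpsDependent F ε (l.get i) (l.take i.val))
    (hs : ¬ EpsDependent F ε s l) :
    ∀ i : Fin (l ++ [s]).length,
      ¬ EpsDependent F ε ((l ++ [s]).get i) ((l ++ [s]).take i.val) := by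
  rintro ⟨i, hi⟩
  have hi' : i < l.length + 1 := by simpa using hi
  rcases Nat.lt_succ_iff_lt_or_eq.mp hi' with h | rfl
  · have := hl ⟨i, h⟩
    simpa [List.getElem_append_left h, List.take_append_of_le_length h.le] using this
  · simpa using hs

/-- If `f, g ∈ F` are both within squared distance `b` of a center `c` on the past rounds, while
`|f s - g s| > ε`, then `s` is `ε`-independent of one of any `K > 4 b / ε²` lists packed into the
past rounds. The packing is expressed by domination of sums of nonnegative functions. -/
lemma exists_not_epsDependent {S : Type*} {F : Set (S → ℝ)} {ε b : ℝ} (hε : 0 < ε) {K n : ℕ}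
    (hK : 4 * b < K * ε ^ 2) {Sseq : ℕ → S} {L : Fin K → List S}
    (hL : ∀ h : S → ℝ, (∀ x, 0 ≤ h x) →
      ∑ j, ((L j).map h).sum ≤ ∑ k ∈ Finset.Icc 1 n, h (Sseq k))
    {f g c : S → ℝ} {s : S} (hf : f ∈ F) (hg : g ∈ F)
    (hfc : ∑ k ∈ Finset.Icc 1 n, (f (Sseq k) - c (Sseq k)) ^ 2 ≤ b)
    (hgc : ∑ k ∈ Finset.Icc 1 n, (g (Sseq k) - c (Sseq k)) ^ 2 ≤ b)
    (hfg : ε < |f s - g s|) : ∃ j, ¬ EpsDependent F ε s (L j) := by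
  by_contra! hdep
  have hlow : ∀ j, ε ^ 2 ≤ ((L j).map fun x => (f x - g x) ^ 2).sum := by
    intro j
    by_contra! hlt
    have := hdep j f hf g hg ((Real.sqrt_le_left hε.le).mpr hlt.le)
    linarith
  have h1 : (K : ℝ) * ε ^ 2 ≤ ∑ j, ((L j).map fun x => (f x - g x) ^ 2).sum := by
    simpa using Finset.sum_le_sum fun j (_ : j ∈ Finset.univ) => hlow j
  have h2 := hL (fun x => (f x - g x) ^ 2) fun x => sq_nonneg _
  have h3 : ∑ k ∈ Finset.Icc 1 n, (f (Sseq k) - g (Sseq k)) ^ 2 ≤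
      ∑ k ∈ Finset.Icc 1 n, (2 * (f (Sseq k) - c (Sseq k)) ^ 2 +
        2 * (g (Sseq k) - c (Sseq k)) ^ 2) := by
    apply Finset.sum_le_sum
    intro k _
    nlinarith [sq_nonneg (f (Sseq k) - c (Sseq k) + (g (Sseq k) - c (Sseq k)))]
  rw [Finset.sum_add_distrib, ← Finset.mul_sum, ← Finset.mul_sum] at h3
  linarith

/-- If each round of `P` up to `T` admits an independent list among any `K` lists packed into the
preceding rounds, then the rounds of `P` up to `n` can be distributed into `K` lists, each of them
an eluder sequence at scale `ε`. -/
lemma exists_indep_lists {S : Type*} {F : Set (S → ℝ)} {ε : ℝ} {K T : ℕ} {Sseq : ℕ → S}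
    (P : ℕ → Prop) [DecidablePred P]
    (hP : ∀ n < T, P (n + 1) → ∀ L : Fin K → List S,
      (∀ h : S → ℝ, (∀ x, 0 ≤ h x) →
        ∑ j, ((L j).map h).sum ≤ ∑ k ∈ Finset.Icc 1 n, h (Sseq k)) →
      ∃ j, ¬ EpsDependent F ε (Sseq (n + 1)) (L j)) (n : ℕ) (hn : n ≤ T) :
    ∃ L : Fin K → List S,
      (∀ j, ∀ i : Fin (L j).length, ¬ EpsDependent F ε ((L j).get i) ((L j).take i.val)) ∧
      ∑ j, (L j).length = ((Finset.Icc 1 n).filter P).card ∧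
      ∀ h : S → ℝ, (∀ x, 0 ≤ h x) →
        ∑ j, ((L j).map h).sum ≤ ∑ k ∈ Finset.Icc 1 n, h (Sseq k) := by
  induction n with
  | zero => exact ⟨fun _ => [], fun j i => i.elim0, by simp, by simp⟩
  | succ n ih =>
    obtain ⟨L, hind, hlen, hsum⟩ := ih (by omega)
    have hIcc : Finset.Icc 1 (n + 1) = insert (n + 1) (Finset.Icc 1 n) := by
      ext x
      simp only [Finset.mem_Icc, Finset.mem_insert]
      omega
    have hnot : n + 1 ∉ Finset.Icc 1 n := by simp
    by_cases hp : P (n + 1)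
    · obtain ⟨j₀, hj₀⟩ := hP n (by omega) hp L hsum
      refine ⟨fun j => if j = j₀ then L j ++ [Sseq (n + 1)] else L j, ?_, ?_, ?_⟩
      · intro j
        dsimp only
        by_cases hj : j = j₀
        · rw [if_pos hj]
          exact indep_append (hind j) (hj ▸ hj₀)
        · rw [if_neg hj]
          exact hind j
      · have : ∀ j, (if j = j₀ then L j ++ [Sseq (n + 1)] else L j).length =
            (L j).length + if j = j₀ then 1 else 0 := by
          intro j
          split_ifs <;> simp
        simp only [this, Finset.sum_add_distrib, hlen]
        rw [hIcc, Finset.filter_insert, if_pos hp, Finset.card_insert_of_notMem (by simp)]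
        simp
      · intro h hh
        have : ∀ j, ((if j = j₀ then L j ++ [Sseq (n + 1)] else L j).map h).sum =
            ((L j).map h).sum + if j = j₀ then h (Sseq (n + 1)) else 0 := by
          intro j
          split_ifs <;> simp
        simp only [this, Finset.sum_add_distrib]
        rw [hIcc, Finset.sum_insert hnot]
        have := hsum h hh
        simp only [Finset.sum_ite_eq', Finset.mem_univ, if_true]
        linarith
    · refine ⟨L, hind, ?_, ?_⟩
      · rw [hlen, hIcc, Finset.filter_insert, if_neg hp]
      · intro h hh
        rw [hIcc, Finset.sum_insert hnot]
        linarith [hsum h hh, hh (Sseq (n + 1))]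

open scoped Classical in
/-- Proposition 2 of the paper (after Russo and Van Roy): with confidence sets
`F_t = {f ∈ F : ∑_{k=1}^{t−1}(f(S_k) − f̂_t(S_k))² ≤ β_t}` built from a
nondecreasing nonnegative sequence `(β_t)`, for every `ε > 0` the number of
rounds `t ≤ T` on which `w_{F_t}(S_t) > ε` is at most
`(4β_T/ε² + 1)·dim_E(F, ε)`, where `D` is (an upper bound on) the `ε`-eluder
dimension of `F`. -/
theorem stmt_18 {S : Type*} (F : Set (S → ℝ)) (T : ℕ) (Sseq : ℕ → S)
    (β : ℕ → ℝ) (hβnn : ∀ t, 0 ≤ β t)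
    (hβmono : ∀ t₁ t₂, 1 ≤ t₁ → t₁ ≤ t₂ → t₂ ≤ T → β t₁ ≤ β t₂)
    (fhat : ℕ → S → ℝ) (Fconf : ℕ → Set (S → ℝ))
    (hFconf : ∀ t, Fconf t =
      {f ∈ F | ∑ k ∈ Finset.Icc 1 (t - 1), (f (Sseq k) - fhat t (Sseq k)) ^ 2 ≤ β t})
    (ε : ℝ) (hε : 0 < ε) (D : ℕ)
    (hdim : ∀ l : List S, IsEluderSeq F ε l → l.length ≤ D) :
    (((Finset.Icc 1 T).filter fun t => ε < width (Fconf t) (Sseq t)).card : ℝ) ≤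
      (4 * β T / ε ^ 2 + 1) * D := by
  set K : ℕ := ⌊4 * β T / ε ^ 2⌋₊ + 1 with hKdef
  have hε2 : 0 < ε ^ 2 := by positivity
  have hnn : 0 ≤ 4 * β T / ε ^ 2 := div_nonneg (by linarith [hβnn T]) hε2.le
  have hK : 4 * β T < K * ε ^ 2 := by
    rw [← div_lt_iff₀ hε2, hKdef]
    push_cast
    exact Nat.lt_floor_add_one (4 * β T / ε ^ 2)
  have hK' : (K : ℝ) ≤ 4 * β T / ε ^ 2 + 1 := by
    rw [hKdef]
    push_cast
    linarith [Nat.floor_le hnn]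
  obtain ⟨L, hind, hlen, -⟩ := exists_indep_lists (F := F) (ε := ε) (K := K) (T := T)
    (Sseq := Sseq) (fun t => ε < width (Fconf t) (Sseq t)) (by
      intro n hn hw L hL
      obtain ⟨f, hf, g, hg, hfg⟩ := exists_of_lt_width hε hw
      rw [hFconf] at hf hg
      have hb := hβmono (n + 1) T (by omega) hn le_rfl
      exact exists_not_epsDependent hε hK hL hf.1 hg.1 (hf.2.trans hb) (hg.2.trans hb) hfg)
    T le_rfl
  have hle : ∑ j, (L j).length ≤ K * D := by
    simpa using Finset.sum_le_sum fun j (_ : j ∈ Finset.univ) =>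
      hdim (L j) ⟨ε, le_rfl, hind j⟩
  rw [← hlen]
  calc ((∑ j, (L j).length : ℕ) : ℝ) ≤ K * D := by exact_mod_cast hle
    _ ≤ (4 * β T / ε ^ 2 + 1) * D := by gcongr
end

section
/- Let S be a set, let C > 0, and let F be a class of functions from S to [0, C]. Let T ∈ ℕ, let S₁, …, S_T ∈ S, let (β_t)_{t=1}^T be a nondecreasing sequence of nonnegative reals, and for each t let f̂_t : S → ℝ be any function. Define F_t = {f ∈ F : ∑_{k=1}^{t−1} (f(S_k) − f̂_t(S_k))² ≤ β_t} and w_{F_t}(s) = sup_{f∈F_t} f(s) − inf_{f∈F_t} f(s). Then ∑_{t=1}^T w_{F_t}(S_t) ≤ 1 + dim_E(F, T^{−1}) · C + 4 √(dim_E(F, T^{−1}) · β_T · T). -/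
/-- Every entry of `l` is `ε`-independent of its predecessors, with the scale `ε` fixed. -/
def IndepSeq {S : Type*} (F : Set (S → ℝ)) (ε : ℝ) (l : List S) : Prop :=
  ∀ i : Fin l.length, ¬ EpsDependent F ε (l.get i) (l.take i.val)

lemma IndepSeq.concat {S : Type*} {F : Set (S → ℝ)} {ε : ℝ} {l : List S} {s : S}
    (hl : IndepSeq F ε l) (hs : ¬ EpsDependent F ε s l) : IndepSeq F ε (l ++ [s]) := by
  rintro ⟨i, hi⟩
  rcases Nat.lt_or_ge i l.length with h | h
  · have := hl ⟨i, h⟩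
    simpa [List.getElem_append_left h, List.take_append_of_le_length h.le] using this
  · have hi' : i = l.length := by simp at hi; omega
    subst hi'
    simpa using hs

/-- The bin construction: the elements `s t`, for `t ∈ A` and `t < n`, can be distributed over `K`
bins that are independent sequences, as long as no `s t` with `t ∈ A` is dependent on all bins of
such a distribution of its predecessors. That the bins partition the elements is expressed by
equality of the sums of every function `h`. -/
lemma exists_bins {S : Type*} (F : Set (S → ℝ)) (ε : ℝ) (s : ℕ → S) (A : Finset ℕ) (K : ℕ)
    (hA : ∀ t ∈ A, ∀ L : Fin K → List S,
      (∀ h : S → ℝ, ∑ k, ((L k).map h).sum = ∑ u ∈ A with u < t, h (s u)) →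
      ∃ k, ¬ EpsDependent F ε (s t) (L k)) (n : ℕ) :
    ∃ L : Fin K → List S, (∀ k, IndepSeq F ε (L k)) ∧
      ∀ h : S → ℝ, ∑ k, ((L k).map h).sum = ∑ u ∈ A with u < n, h (s u) := by
  induction n with
  | zero => exact ⟨fun _ => [], fun k i => i.elim0, fun h => by simp⟩
  | succ n ih =>
    obtain ⟨L, hL, hsum⟩ := ih
    by_cases hn : n ∈ A
    · obtain ⟨k, hk⟩ := hA n hn L hsum
      refine ⟨Function.update L k (L k ++ [s n]), fun j => ?_, fun h => ?_⟩
      · rcases eq_or_ne j k with rfl | hj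
        · simpa using (hL j).concat hk
        · simpa [hj] using hL j
      · have e1 : (A.filter (· < n + 1)) = insert n (A.filter (· < n)) := by
          ext u; simp only [Finset.mem_filter, Finset.mem_insert]; grind
        have e2 : ∀ j, ((Function.update L k (L k ++ [s n]) j).map h).sum
            = ((L j).map h).sum + if j = k then h (s n) else 0 := by
          intro j
          rcases eq_or_ne j k with rfl | hj
          · simp
          · simp [hj]
        rw [e1, Finset.sum_insert (by simp), ← hsum h]
        simp only [e2, Finset.sum_add_distrib]
        simp [add_comm]
    · have e1 : (A.filter (· < n + 1)) = A.filter (· < n) := by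
        ext u; simp only [Finset.mem_filter]; grind
      exact ⟨L, hL, by rw [e1]; exact hsum⟩

lemma exists_pair_of_lt_width {S : Type*} {G : Set (S → ℝ)} {s : S} {ε : ℝ} (hε : 0 ≤ ε)
    (h : ε < width G s) : ∃ f ∈ G, ∃ g ∈ G, ε < f s - g s := by
  rcases G.eq_empty_or_nonempty with rfl | hne
  · simp [width] at h; linarith
  · have hne' : ((fun f : S → ℝ => f s) '' G).Nonempty := hne.image _
    unfold width at h
    obtain ⟨_, ⟨f, hf, rfl⟩, h1⟩ := exists_lt_of_lt_csSup hne'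
      (show ε + sInf ((fun f : S → ℝ => f s) '' G) < _ by linarith)
    obtain ⟨_, ⟨g, hg, rfl⟩, h2⟩ := exists_lt_of_csInf_lt hne'
      (show sInf ((fun f : S → ℝ => f s) '' G) < f s - ε by linarith)
    exact ⟨f, hf, g, hg, by linarith⟩

lemma width_le {S : Type*} {G : Set (S → ℝ)} {s : S} {C : ℝ} (hC : 0 ≤ C)
    (h : ∀ f ∈ G, f s ∈ Set.Icc (0 : ℝ) C) : width G s ≤ C := by
  have h1 : sSup ((fun f : S → ℝ => f s) '' G) ≤ C :=
    Real.sSup_le (by rintro _ ⟨f, hf, rfl⟩; exact (h f hf).2) hC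
  have h2 : 0 ≤ sInf ((fun f : S → ℝ => f s) '' G) :=
    Real.sInf_nonneg (by rintro _ ⟨f, hf, rfl⟩; exact (h f hf).1)
  unfold width; linarith

/-- A set `A` of times at which two elements of the confidence set differ by more than `ε` has at
most `(4B/ε² + 1) D` elements, where `B` bounds the squared radii. -/
lemma card_le_of_lt_width {S : Type*} (F : Set (S → ℝ)) (ε B : ℝ) (hε : 0 < ε) (hB : 0 ≤ B)
    (s : ℕ → S) (A : Finset ℕ) (D : ℕ)
    (hdim : ∀ l : List S, IndepSeq F ε l → l.length ≤ D)
    (fhat : ℕ → S → ℝ) (h1 : ∀ t ∈ A, 1 ≤ t)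
    (hA : ∀ t ∈ A, ∃ f ∈ F, ∃ g ∈ F, ε < f (s t) - g (s t) ∧
      ∑ k ∈ Finset.Icc 1 (t - 1), (f (s k) - fhat t (s k)) ^ 2 ≤ B ∧
      ∑ k ∈ Finset.Icc 1 (t - 1), (g (s k) - fhat t (s k)) ^ 2 ≤ B) :
    (A.card : ℝ) ≤ (4 * B / ε ^ 2 + 1) * D := by
  set K := ⌊4 * B / ε ^ 2⌋₊ + 1 with hK
  have hKlt : 4 * B < K * ε ^ 2 := by
    have := Nat.lt_floor_add_one (4 * B / ε ^ 2)
    rw [div_lt_iff₀ (by positivity)] at this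
    simpa [hK] using this
  have hKle : (K : ℝ) ≤ 4 * B / ε ^ 2 + 1 := by
    have := Nat.floor_le (show 0 ≤ 4 * B / ε ^ 2 by positivity)
    simpa [hK] using this
  obtain ⟨L, hL, hsum⟩ := exists_bins F ε s A K (by
    intro t ht L hsum
    by_contra! hdep
    obtain ⟨f, hf, g, hg, hlt, hfB, hgB⟩ := hA t ht
    have hbin : ∀ k, ε ^ 2 ≤ ((L k).map fun x => (f x - g x) ^ 2).sum := by
      intro k
      by_contra! hc
      have := hdep k f hf g hg (Real.sqrt_le_iff.2 ⟨hε.le, hc.le⟩)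
      exact absurd (le_trans (le_abs_self _) this) (not_le.2 hlt)
    have hlow : K * ε ^ 2 ≤ ∑ u ∈ A with u < t, (f (s u) - g (s u)) ^ 2 := by
      rw [← hsum fun x => (f x - g x) ^ 2]
      simpa using Finset.sum_le_sum fun k (_ : k ∈ Finset.univ) => hbin k
    have hsub : ∑ u ∈ A with u < t, (f (s u) - g (s u)) ^ 2
        ≤ ∑ u ∈ Finset.Icc 1 (t - 1), (f (s u) - g (s u)) ^ 2 := by
      refine Finset.sum_le_sum_of_subset_of_nonneg (fun u hu => ?_) fun _ _ _ => sq_nonneg _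
      simp only [Finset.mem_filter, Finset.mem_Icc] at hu ⊢
      have := h1 u hu.1
      omega
    have hup : ∑ u ∈ Finset.Icc 1 (t - 1), (f (s u) - g (s u)) ^ 2
        ≤ 2 * ∑ k ∈ Finset.Icc 1 (t - 1), (f (s k) - fhat t (s k)) ^ 2
          + 2 * ∑ k ∈ Finset.Icc 1 (t - 1), (g (s k) - fhat t (s k)) ^ 2 := by
      rw [Finset.mul_sum, Finset.mul_sum, ← Finset.sum_add_distrib]
      refine Finset.sum_le_sum fun u _ => ?_
      nlinarith [sq_nonneg ((f (s u) - fhat t (s u)) + (g (s u) - fhat t (s u)))]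
    linarith) (A.sup id + 1)
  have hall : A.filter (· < A.sup id + 1) = A :=
    Finset.filter_true_of_mem fun u hu => Nat.lt_succ_of_le (Finset.le_sup (f := id) hu)
  -- The partition identity for the constant function `1` computes the total length of the bins.
  have hcard : (A.card : ℝ) = ∑ k, ((L k).length : ℝ) := by
    have := hsum fun _ => 1
    rw [hall] at this
    simpa using this.symm
  calc (A.card : ℝ) = ∑ k, ((L k).length : ℝ) := hcard
    _ ≤ ∑ _k : Fin K, (D : ℝ) :=
        Finset.sum_le_sum fun k _ => by exact_mod_cast hdim _ (hL k)
    _ = K * D := by simp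
    _ ≤ _ := by gcongr

/-- Summation of a decreasing rearrangement without sorting: if every value `w t` on `A` is at most
`C` and satisfies `(r - D) (w t)² ≤ a²`, where `r` is the number of values at least `w t`, then
`∑ w` is at most `D` terms `C` plus `∑_{D < i ≤ n} a/√(i - D)`. The induction removes the smallest
value, and `1/√j ≤ 2 (√j - √(j - 1))` telescopes. The subtraction `n - D` is truncated: for `n ≤ D`
only the bound by `C` is used. -/
lemma sum_le_of_card (w : ℕ → ℝ) (C a : ℝ) (ha : 0 ≤ a) (D : ℕ) (n : ℕ) (A : Finset ℕ)
    (hn : A.card = n) (hpos : ∀ t ∈ A, 0 ≤ w t) (hwC : ∀ t ∈ A, w t ≤ C)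
    (hA : ∀ t ∈ A, (((A.filter (w t ≤ w ·)).card : ℝ) - D) * w t ^ 2 ≤ a ^ 2) :
    ∑ t ∈ A, w t ≤ (min n D : ℕ) * C + 2 * a * √((n - D : ℕ) : ℝ) := by
  induction n generalizing A with
  | zero => simp [Finset.card_eq_zero.1 hn]
  | succ n ih =>
    obtain ⟨t, ht, hmin⟩ := A.exists_min_image w (Finset.card_pos.1 (by omega))
    have ih' := ih (A.erase t) (by rw [Finset.card_erase_of_mem ht]; omega)
      (fun u hu => hpos u (Finset.mem_of_mem_erase hu))
      (fun u hu => hwC u (Finset.mem_of_mem_erase hu)) (fun u hu => by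
        refine le_trans ?_ (hA u (Finset.mem_of_mem_erase hu))
        have : ((A.erase t).filter (w u ≤ w ·)).card ≤ (A.filter (w u ≤ w ·)).card :=
          Finset.card_le_card (Finset.filter_subset_filter _ (Finset.erase_subset _ _))
        gcongr)
    rw [← Finset.add_sum_erase A w ht]
    rcases Nat.lt_or_ge n D with hlt | hge
    · rw [min_eq_left (by omega), Nat.sub_eq_zero_of_le (by omega)] at ih' ⊢
      have := hwC t ht
      push_cast at ih' ⊢
      linarith
    · obtain ⟨m, rfl⟩ := Nat.exists_eq_add_of_le hge
      rw [min_eq_right (by omega), show D + m - D = m by omega] at ih'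
      rw [min_eq_right (by omega), show D + m + 1 - D = m + 1 by omega]
      have hall : A.filter (w t ≤ w ·) = A := Finset.filter_true_of_mem hmin
      have key := hA t ht
      rw [hall, hn] at key
      push_cast at key ⊢
      have hw := hpos t ht
      set q := √((m : ℝ) + 1) with hq
      set p := √(m : ℝ) with hp
      have hq2 : q ^ 2 = m + 1 := Real.sq_sqrt (by positivity)
      have hp2 : p ^ 2 = m := Real.sq_sqrt (by positivity)
      have hq0 : 0 < q := Real.sqrt_pos.2 (by positivity)
      have hqw : q * w t ≤ a := by
        refine abs_le_of_sq_le_sq' ?_ ha |>.2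
        rw [mul_pow, hq2]; linarith
      -- `1/q ≤ 2 (q - p)`, from `q² - p² = 1`
      have hqp : 1 ≤ 2 * (q - p) * q := by nlinarith [sq_nonneg (q - p)]
      have hwt : w t ≤ 2 * a * (q - p) := by
        refine le_of_mul_le_mul_left ?_ hq0
        nlinarith
      linarith

/-- Proposition 3 of the paper (after Russo and Van Roy): for `F` a class of
functions `S → [0, C]` and confidence sets
`F_t = {f ∈ F : ∑_{k=1}^{t−1}(f(S_k) − f̂_t(S_k))² ≤ β_t}` built from a
nondecreasing nonnegative sequence `(β_t)`,
`∑_{t=1}^T w_{F_t}(S_t) ≤ 1 + dim_E(F, T⁻¹)·C + 4√(dim_E(F, T⁻¹)·β_T·T)`,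
where `D` is (an upper bound on) the `T⁻¹`-eluder dimension of `F`. -/
theorem stmt_19 {S : Type*} (C : ℝ) (hC : 0 < C) (F : Set (S → ℝ))
    (hFrange : ∀ f ∈ F, ∀ s : S, f s ∈ Set.Icc (0 : ℝ) C)
    (T : ℕ) (Sseq : ℕ → S)
    (β : ℕ → ℝ) (hβnn : ∀ t, 0 ≤ β t)
    (hβmono : ∀ t₁ t₂, 1 ≤ t₁ → t₁ ≤ t₂ → t₂ ≤ T → β t₁ ≤ β t₂)
    (fhat : ℕ → S → ℝ) (Fconf : ℕ → Set (S → ℝ))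
    (hFconf : ∀ t, Fconf t =
      {f ∈ F | ∑ k ∈ Finset.Icc 1 (t - 1), (f (Sseq k) - fhat t (Sseq k)) ^ 2 ≤ β t})
    (D : ℕ) (hdim : ∀ l : List S, IsEluderSeq F ((T : ℝ)⁻¹) l → l.length ≤ D) :
    ∑ t ∈ Finset.Icc 1 T, width (Fconf t) (Sseq t) ≤
      1 + D * C + 4 * Real.sqrt (D * β T * T) := by
  rcases Nat.eq_zero_or_pos T with rfl | hT
  · simp; positivity
  have hT' : (0 : ℝ) < T := by exact_mod_cast hT
  have hTinv : (0 : ℝ) < (T : ℝ)⁻¹ := by positivity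
  set w : ℕ → ℝ := fun t => width (Fconf t) (Sseq t) with hw
  have hcount : ∀ ε : ℝ, (T : ℝ)⁻¹ ≤ ε → ∀ A ⊆ Finset.Icc 1 T, (∀ t ∈ A, ε < w t) →
      (A.card : ℝ) ≤ (4 * β T / ε ^ 2 + 1) * D := by
    intro ε hε A hAT hAw
    refine card_le_of_lt_width F ε (β T) (hTinv.trans_le hε) (hβnn T) Sseq A D
      (fun l hl => hdim l ⟨ε, hε, hl⟩) fhat (fun t ht => (Finset.mem_Icc.1 (hAT ht)).1) ?_
    intro t ht
    obtain ⟨ht1, htT⟩ := Finset.mem_Icc.1 (hAT ht)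
    obtain ⟨f, hf, g, hg, hfg⟩ := exists_pair_of_lt_width (hTinv.trans_le hε).le (hAw t ht)
    rw [hFconf t] at hf hg
    have hβ := hβmono t T ht1 htT le_rfl
    exact ⟨f, hf.1, g, hg.1, hfg, hf.2.trans hβ, hg.2.trans hβ⟩
  set A := (Finset.Icc 1 T).filter ((T : ℝ)⁻¹ < w ·) with hA
  have hAT : A ⊆ Finset.Icc 1 T := Finset.filter_subset _ _
  have hAcard : A.card ≤ T := by simpa using Finset.card_le_card hAT
  set a := 2 * √(D * β T) with ha
  have hDβ : 0 ≤ D * β T := mul_nonneg (by positivity) (hβnn T)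
  have ha2 : a ^ 2 = 4 * (D * β T) := by rw [ha, mul_pow, Real.sq_sqrt hDβ]; norm_num
  have hbig := sum_le_of_card w C a (by positivity) D A.card A rfl
    (fun t ht => (hTinv.trans (Finset.mem_filter.1 ht).2).le)
    (fun t _ => width_le hC.le fun f hf => by
      rw [hFconf t] at hf; exact hFrange f hf.1 _)
    (by
      intro t ht
      have htw : (T : ℝ)⁻¹ < w t := (Finset.mem_filter.1 ht).2
      -- The count requires a strict inequality `ε < w u`, so it is used for `ε` increasing to `w t`.
      have hlim : Filter.Tendsto
          (fun ε : ℝ => (((A.filter (w t ≤ w ·)).card : ℝ) - D) * ε ^ 2)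
          (nhdsWithin (w t) (Set.Iio (w t)))
          (nhds ((((A.filter (w t ≤ w ·)).card : ℝ) - D) * w t ^ 2)) :=
        ((by fun_prop : Continuous fun ε : ℝ =>
          (((A.filter (w t ≤ w ·)).card : ℝ) - D) * ε ^ 2).tendsto _).mono_left
          nhdsWithin_le_nhds
      refine le_of_tendsto hlim ?_
      filter_upwards [Ioo_mem_nhdsLT htw] with ε hε
      have hε0 : 0 < ε := hTinv.trans hε.1
      have := hcount ε hε.1.le (A.filter (w t ≤ w ·)) ((Finset.filter_subset _ _).trans hAT)
        (fun u hu => hε.2.trans_le (Finset.mem_filter.1 hu).2)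
      calc _ ≤ (4 * β T / ε ^ 2 * D) * ε ^ 2 := by gcongr; linarith
        _ = a ^ 2 := by rw [ha2]; field_simp)
  have hsmall : ∑ t ∈ Finset.Icc 1 T with ¬ (T : ℝ)⁻¹ < w t, w t ≤ 1 := by
    calc _ ≤ ((Finset.Icc 1 T).filter (¬ (T : ℝ)⁻¹ < w ·)).card • (T : ℝ)⁻¹ :=
          Finset.sum_le_card_nsmul _ _ _ fun t ht => not_lt.1 (Finset.mem_filter.1 ht).2
      _ ≤ T * (T : ℝ)⁻¹ := by
          rw [nsmul_eq_mul]
          gcongr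
          simpa using Finset.card_filter_le (Finset.Icc 1 T) (¬ (T : ℝ)⁻¹ < w ·)
      _ = 1 := mul_inv_cancel₀ hT'.ne'
  have hD : ((min A.card D : ℕ) : ℝ) * C ≤ D * C := by gcongr; exact min_le_right _ _
  have hroot : 2 * a * √((A.card - D : ℕ) : ℝ) ≤ 4 * √(D * β T * T) := by
    have : √((A.card - D : ℕ) : ℝ) ≤ √(T : ℝ) := by
      gcongr; omega
    rw [Real.sqrt_mul hDβ]
    calc _ ≤ 2 * a * √(T : ℝ) := by gcongr
      _ = _ := by rw [ha]; ring
  have hsplit := Finset.sum_filter_add_sum_filter_not (Finset.Icc 1 T) ((T : ℝ)⁻¹ < w ·) w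
  change ∑ t ∈ Finset.Icc 1 T, w t ≤ _
  linarith
end
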